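/- Let 𝔤 be a finite-dimensional complex simple Lie algebra of type E8, and let (e,h,f) be an sl2-triple in 𝔤 such that e is a distinguished nilpotent element which is not regular. Then e satisfies property (P). -/

import Mathlib

open scoped ComplexOrder

/-- The centralizer `𝔤^e = {x ∈ 𝔤 : ⁅x, e⁆ = 0}` of an element `e`, as a Lie subalgebra. -/
def centralizer (L : Type*) [LieRing L] [LieAlgebra ℂ L] (e : L) : LieSubalgebra ℂ L where
  carrier := {x : L | ⁅x, e⁆ = 0}
  add_mem' := fun {a b} ha hb => by
    simp only [Set.mem_setOf_eq] at *
    rw [add_lie, ha, hb, add_zero]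
  zero_mem' := by simp
  smul_mem' := fun c a ha => by
    simp only [Set.mem_setOf_eq] at *
    rw [smul_lie, ha, smul_zero]
  lie_mem' := fun {a b} ha hb => by
    simp only [Set.mem_setOf_eq] at *
    simp [lie_lie, ha, hb]

/-- Membership in the centre `𝔷(𝔤^e)` of the centralizer of `e`:
`v` centralizes `e` and commutes with every element of `𝔤^e`. -/
def InCenterOfCentralizer (L : Type*) [LieRing L] [LieAlgebra ℂ L] (e v : L) : Prop :=
  ⁅v, e⁆ = 0 ∧ ∀ y : L, ⁅y, e⁆ = 0 → ⁅v, y⁆ = 0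

/-- The centre `𝔷(𝔤^e)` of the centralizer of `e`, as a subspace of `L`. -/
def zCenter (L : Type*) [LieRing L] [LieAlgebra ℂ L] (e : L) : Submodule ℂ L where
  carrier := {v : L | ⁅v, e⁆ = 0 ∧ ∀ y : L, ⁅y, e⁆ = 0 → ⁅v, y⁆ = 0}
  add_mem' := fun {a b} ha hb => ⟨by rw [add_lie, ha.1, hb.1, add_zero],
    fun y hy => by rw [add_lie, ha.2 y hy, hb.2 y hy, add_zero]⟩
  zero_mem' := ⟨zero_lie e, fun y _ => zero_lie y⟩
  smul_mem' := fun c a ha => ⟨by rw [smul_lie, ha.1, smul_zero],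
    fun y hy => by rw [smul_lie, ha.2 y hy, smul_zero]⟩

/-- Property (P) for an `sl₂`-triple `(e, h, f)`: for every nonzero `v ∈ 𝔷(𝔤^e)`, the
eigenspace `𝔷_max` of the restriction of `ad h` to `𝔷(𝔤^e)` for its largest eigenvalue is
contained in `[[f, 𝔤^e], v] = {⁅⁅f, x⁆, v⁆ : x ∈ 𝔤^e}`. -/
def PropertyP (L : Type*) [LieRing L] [LieAlgebra ℂ L] (e h f : L) : Prop :=
  ∀ m : ℂ,
    (∃ z : L, z ≠ 0 ∧ InCenterOfCentralizer L e z ∧ ⁅h, z⁆ = m • z) →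
    (∀ m' : ℂ, (∃ z : L, z ≠ 0 ∧ InCenterOfCentralizer L e z ∧ ⁅h, z⁆ = m' • z) → m' ≤ m) →
    ∀ v : L, InCenterOfCentralizer L e v → v ≠ 0 →
      ∀ z : L, InCenterOfCentralizer L e z → ⁅h, z⁆ = m • z →
        ∃ x : L, ⁅x, e⁆ = 0 ∧ ⁅⁅f, x⁆, v⁆ = z

/-- The stabilizer `{x ∈ 𝔮 : ξ(⁅x, y⁆) = 0 for all y ∈ 𝔮}` of a linear functional `ξ`. -/
def coadStab (Q : Type*) [LieRing Q] [LieAlgebra ℂ Q] (ξ : Module.Dual ℂ Q) : Submodule ℂ Q where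
  carrier := {x : Q | ∀ y : Q, ξ ⁅x, y⁆ = 0}
  add_mem' := fun {a b} ha hb y => by rw [add_lie, map_add, ha y, hb y, add_zero]
  zero_mem' := fun y => by rw [zero_lie, map_zero]
  smul_mem' := fun c a ha y => by rw [smul_lie, map_smul, ha y, smul_zero]

/-- The index of a complex Lie algebra:
`ind 𝔮 = min_{ξ ∈ 𝔮*} dim {x ∈ 𝔮 : ξ(⁅x, y⁆) = 0 for all y ∈ 𝔮}`. -/
noncomputable def lieIndex (Q : Type*) [LieRing Q] [LieAlgebra ℂ Q] : ℕ :=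
  ⨅ ξ : Module.Dual ℂ Q, Module.finrank ℂ ↥(coadStab Q ξ)

/-- A nilpotent element `e` is distinguished if the only `x ∈ 𝔤^e` such that `ad x` is a
semisimple endomorphism of `𝔤` is `x = 0`. -/
def IsDistinguished (L : Type*) [LieRing L] [LieAlgebra ℂ L] (e : L) : Prop :=
  ∀ x : L, ⁅x, e⁆ = 0 → (LieAlgebra.ad ℂ L x).IsSemisimple → x = 0

/-!
Let `m` be the highest weight of `ad h`; it is the largest eigenvalue of `ad h` on `𝔷(𝔤^e)`. To
reach a vector `z` of weight `m` from `v`, one may replace `v` by its component of lowest weight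
`k`. If `z` is missed by `[[f, 𝔤^e], v]`, then duality under the Killing form gives `w` of weight
`-m` with `κ(w, z) ≠ 0` that is orthogonal to `[[f, v], 𝔤^e]`. Consider the cyclic element `e + w`.
A grading automorphism multiplies it by a scalar, so its Jordan components are homogeneous; as `e`
is distinguished, they are `es + w` and `en`, and the `sl₂`-triple splits into commuting triples
`(es, h - t, fs)` and `(en, t, fn)`. Orthogonality then forces `v` to commute with `w`, `es`, `en`
and `fs`, and highest weight theory for the two triples gives `ad w ∘ ad v = 0`. Hence `ad v`
intertwines the nilpotent `ad es` with the semisimple `ad (es + w)`, so `v` annihilates the range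
of `ad (es + w)`. Such elements form an ideal, and `v = 0` by simplicity.
-/

section Eigenvectors

open Module Polynomial

variable {K M : Type*} [Field K] [AddCommGroup M] [Module K M] {H : End K M}

lemma le_of_forall_eigenvector [FiniteDimensional K M] {ι : Type*} {a : ι → K}
    {Q N : Submodule K M} (hstable : ∀ x ∈ Q, H x ∈ Q) (hQ : Q ≤ ⨆ i, H.eigenspace (a i))
    (hN : ∀ i, ∀ x ∈ Q, H x = a i • x → x ∈ N) : Q ≤ N := by
  rw [← inf_eq_left.mpr (hQ.trans (iSup_le fun i => le_iSup H.eigenspace (a i))),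
    Submodule.inf_iSup_genEigenspace hstable 1]
  refine iSup_le fun μ x hx => ?_
  by_cases hμ : ∃ i, a i = μ
  · obtain ⟨i, rfl⟩ := hμ
    exact hN i x hx.1 (End.mem_eigenspace_iff.mp hx.2)
  · have hle : ⨆ i, H.eigenspace (a i) ≤ ⨆ ν, ⨆ (_ : ν ≠ μ), H.eigenspace ν :=
      iSup_le fun i => le_iSup₂ (f := fun ν _ => H.eigenspace ν) (a i) fun h => hμ ⟨i, h⟩
    rw [Submodule.disjoint_def.mp (H.eigenspaces_iSupIndep μ) x hx.2 (hle (hQ hx.1))]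
    exact zero_mem N

lemma ker_aeval_prod_X_sub_C_le {ι : Type*} (s : Finset ι) {a : ι → K}
    (ha : Function.Injective a) :
    LinearMap.ker (aeval H (∏ i ∈ s, (X - C (a i)))) ≤ ⨆ i, H.eigenspace (a i) := by
  classical
  induction s using Finset.induction_on with
  | empty => simp [End.one_eq_id]
  | insert i s hi ih =>
    rw [Finset.prod_insert hi, ← sup_ker_aeval_eq_ker_aeval_mul_of_coprime]
    · refine sup_le (le_iSup_of_le i fun x hx => ?_) ih
      simpa [End.mem_eigenspace_iff, sub_eq_zero] using hx
    · exact IsCoprime.prod_right fun j hj => isCoprime_X_sub_C_of_isUnit_sub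
        (sub_ne_zero.mpr (ha.ne (ne_of_mem_of_not_mem hj hi).symm)).isUnit

attribute [local instance] LieRing.ofAssociativeRing

lemma mem_ker_of_lie_eq_smul {A B : End K M} {a : K} (h : ⁅A, B⁆ = a • B) :
    ∀ x ∈ LinearMap.ker B, A x ∈ LinearMap.ker B := fun x (hx : B x = 0) => by
  simpa [Ring.lie_def, hx] using LinearMap.congr_fun h x

end Eigenvectors

/-- The defining relations `⁅e, f⁆ = h`, `⁅h, e⁆ = 2e`, `⁅h, f⁆ = -2f` of `sl₂`. In contrast to
`IsSl2Triple`, all three elements may vanish. -/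
structure Sl2Relations {A : Type*} [LieRing A] (h e f : A) : Prop where
  lie_e_f : ⁅e, f⁆ = h
  lie_h_e : ⁅h, e⁆ = 2 • e
  lie_h_f : ⁅h, f⁆ = -(2 • f)

namespace Sl2Relations

open Polynomial Module

section LieRing

variable {A B : Type*} [LieRing A] [LieRing B] {h e f : A}

lemma flip (r : Sl2Relations h e f) : Sl2Relations (-h) f e where
  lie_e_f := by rw [← lie_skew, r.lie_e_f]
  lie_h_e := by rw [neg_lie, r.lie_h_f, neg_neg]
  lie_h_f := by rw [neg_lie, r.lie_h_e]

lemma map {R : Type*} [CommRing R] [LieAlgebra R A] [LieAlgebra R B] (r : Sl2Relations h e f)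
    (φ : A →ₗ⁅R⁆ B) : Sl2Relations (φ h) (φ e) (φ f) where
  lie_e_f := by rw [← LieHom.map_lie, r.lie_e_f]
  lie_h_e := by rw [← LieHom.map_lie, r.lie_h_e, map_nsmul]
  lie_h_f := by rw [← LieHom.map_lie, r.lie_h_f, map_neg, map_nsmul]

lemma isSl2Triple (r : Sl2Relations h e f) (hh : h ≠ 0) : IsSl2Triple h e f :=
  ⟨hh, r.lie_e_f, r.lie_h_e, r.lie_h_f⟩

lemma f_eq_zero [IsAddTorsionFree A] (r : Sl2Relations h e f) (hh : h = 0) : f = 0 := by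
  simpa [hh] using r.lie_h_f

end LieRing

attribute [local instance] LieRing.ofAssociativeRing

variable {K M : Type*} [Field K] [AddCommGroup M] [Module K M] {H E F : End K M}

lemma h_e_apply (r : Sl2Relations H E F) (x : M) : H (E x) = E (H x) + (2 : K) • E x := by
  have h := LinearMap.congr_fun r.lie_h_e x
  simp only [Ring.lie_def, LinearMap.sub_apply, End.mul_apply, LinearMap.smul_apply] at h
  rw [eq_add_of_sub_eq h]
  module

lemma h_f_apply (r : Sl2Relations H E F) (x : M) : H (F x) = F (H x) - (2 : K) • F x := by
  have h := r.flip.h_e_apply x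
  simp only [LinearMap.neg_apply, map_neg] at h
  rw [neg_eq_iff_eq_neg.mp h]
  module

lemma e_f_apply (r : Sl2Relations H E F) (x : M) : E (F x) = F (E x) + H x := by
  simp [← r.lie_e_f, Ring.lie_def]

lemma f_e_h_apply (r : Sl2Relations H E F) (x : M) : F (E (H x)) = H (F (E x)) := by
  rw [r.h_f_apply, r.h_e_apply, map_add, map_smul, add_sub_cancel_right]

lemma h_pow_f_apply (r : Sl2Relations H E F) (n : ℕ) (x : M) :
    H ((F ^ n) x) = (F ^ n) (H x) - (2 * n : K) • (F ^ n) x := by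
  induction n generalizing x with
  | zero => simp
  | succ n ih =>
    rw [pow_succ', End.mul_apply, End.mul_apply, r.h_f_apply, ih, map_sub, map_smul]
    push_cast
    module

lemma e_pow_f_apply (r : Sl2Relations H E F) {x : M} (hx : F (E x) = 0) (n : ℕ) :
    E ((F ^ (n + 1)) x) = (n + 1 : K) • (F ^ n) (H x - (n : K) • x) := by
  induction n with
  | zero => simp [r.e_f_apply, hx]
  | succ n ih =>
    rw [pow_succ' F (n + 1), End.mul_apply, r.e_f_apply, ih, r.h_pow_f_apply, map_smul,
      ← End.mul_apply F, ← pow_succ']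
    simp only [map_sub, map_smul]
    push_cast
    module

lemma pow_e_pow_f_apply (r : Sl2Relations H E F) (n : ℕ) {x : M} (hx : F (E x) = 0) :
    (E ^ n) ((F ^ n) x) =
      (n.factorial : K) • aeval H (∏ i ∈ Finset.range n, (X - C (i : K))) x := by
  induction n generalizing x with
  | zero => simp
  | succ n ih =>
    have hy : F (E (H x - (n : K) • x)) = 0 := by simp [r.f_e_h_apply, hx]
    rw [pow_succ E, End.mul_apply, r.e_pow_f_apply hx, map_smul, ih hy, Finset.prod_range_succ,
      map_mul, End.mul_apply, smul_smul, Nat.factorial_succ]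
    simp [mul_comm, Nat.cast_smul_eq_nsmul]

lemma hasPrimitiveVectorWith (r : Sl2Relations H E F) (hH : H ≠ 0) {x : M} {a : K}
    (hE : E x = 0) (hx : H x = a • x) (h0 : x ≠ 0) :
    (r.isSl2Triple hH).HasPrimitiveVectorWith x a :=
  ⟨h0, hx, hE⟩

variable [CharZero K]

lemma pow_f_ne_zero (r : Sl2Relations H E F) {x : M} {n : ℕ} (hE : E x = 0)
    (hx : H x = (n : K) • x) (h0 : x ≠ 0) {k : ℕ} (hk : k ≤ n) : (F ^ k) x ≠ 0 := by
  by_cases hH : H = 0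
  · obtain rfl : n = 0 := by simpa [hH, h0] using hx.symm
    simpa [Nat.le_zero.mp hk] using h0
  · simpa using (r.hasPrimitiveVectorWith hH hE hx h0).pow_toEnd_f_ne_zero_of_eq_nat rfl hk

variable [FiniteDimensional K M]

lemma exists_nat (r : Sl2Relations H E F) {x : M} {a : K} (hE : E x = 0) (hx : H x = a • x)
    (h0 : x ≠ 0) : ∃ n : ℕ, a = n := by
  by_cases hH : H = 0
  · exact ⟨0, by simpa [hH, h0] using hx.symm⟩
  · exact (r.hasPrimitiveVectorWith hH hE hx h0).exists_nat

lemma pow_f_eq_zero (r : Sl2Relations H E F) {x : M} {n : ℕ} (hE : E x = 0)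
    (hx : H x = (n : K) • x) : (F ^ (n + 1)) x = 0 := by
  by_cases h0 : x = 0
  · rw [h0, map_zero]
  by_cases hH : H = 0
  · have := IsAddTorsionFree.of_isTorsionFree K (End K M)
    simp [r.f_eq_zero hH]
  · simpa using (r.hasPrimitiveVectorWith hH hE hx h0).pow_toEnd_f_eq_zero_of_eq_nat rfl

/-- The powers of `F` are eigenvectors of `ad H` for pairwise distinct eigenvalues. -/
lemma isNilpotent_f (r : Sl2Relations H E F) : IsNilpotent F := by
  by_contra hF
  have heig (n : ℕ) : (LieAlgebra.ad K (End K M) H).HasEigenvalue (-(2 * n) : K) :=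
    End.hasEigenvalue_of_hasEigenvector (x := F ^ n) <| End.hasEigenvector_iff.mpr
      ⟨End.mem_eigenspace_iff.mpr (LinearMap.ext fun x => by
        simp [Ring.lie_def, r.h_pow_f_apply]), fun hn => hF ⟨n, hn⟩⟩
  exact Set.infinite_of_injective_forall_mem (fun a b hab => by simpa using hab) heig
    (End.finite_hasEigenvalue _)

lemma ker_f_mul_e_le (r : Sl2Relations H E F) :
    LinearMap.ker (F * E) ≤ ⨆ i : ℕ, H.eigenspace (i : K) := by
  obtain ⟨n, hn⟩ := r.isNilpotent_f
  refine le_trans (fun x hx => ?_) (ker_aeval_prod_X_sub_C_le (Finset.range n) Nat.cast_injective)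
  have h := r.pow_e_pow_f_apply n hx
  rw [hn] at h
  simpa [Nat.factorial_ne_zero] using h.symm

lemma ker_f_mul_e (r : Sl2Relations H E F) : LinearMap.ker (F * E) = LinearMap.ker E := by
  refine le_antisymm (le_of_forall_eigenvector (fun x hx => ?_) r.ker_f_mul_e_le
    fun n x hx hxn => ?_) fun x hx => by simp_all
  · have hx : F (E x) = 0 := hx
    simp [r.f_e_h_apply, hx]
  · by_contra hEx
    obtain ⟨k, hk⟩ := r.flip.exists_nat (a := -(n + 2)) hx
      (by rw [LinearMap.neg_apply, r.h_e_apply, hxn, map_smul]; module) hEx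
    have : ((k + n + 2 : ℕ) : K) = 0 := by push_cast; linear_combination -hk
    exact absurd (Nat.cast_eq_zero.mp this) (by omega)

lemma ker_e_sup_range_f (r : Sl2Relations H E F) :
    LinearMap.ker E ⊔ LinearMap.range F = ⊤ := by
  have hdisj : LinearMap.ker E ⊓ LinearMap.range F = ⊥ := by
    rw [eq_bot_iff]
    rintro _ ⟨hx, y, rfl⟩
    exact r.flip.ker_f_mul_e.le hx
  have hinj : Function.Injective (F.domRestrict (LinearMap.range E)) := by
    rw [injective_iff_map_eq_zero]
    rintro ⟨_, y, rfl⟩ h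
    exact Subtype.ext (r.ker_f_mul_e.le h)
  have hle : finrank K (LinearMap.range E) ≤ finrank K (LinearMap.range F) := by
    rw [← LinearMap.finrank_range_of_inj hinj]
    exact Submodule.finrank_mono (by rintro _ ⟨y, rfl⟩; exact ⟨y, rfl⟩)
  have h1 := Submodule.finrank_sup_add_finrank_inf_eq (LinearMap.ker E) (LinearMap.range F)
  have h2 := E.finrank_range_add_finrank_ker
  rw [hdisj, finrank_bot] at h1
  exact Submodule.eq_top_of_finrank_eq (le_antisymm (Submodule.finrank_le _) (by omega))

lemma eq_top_of_ker_e_le (r : Sl2Relations H E F) {N : Submodule K M} (hN : ∀ x ∈ N, F x ∈ N)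
    (hker : LinearMap.ker E ≤ N) : N = ⊤ := by
  have h (n : ℕ) : N ⊔ LinearMap.range (F ^ n) = ⊤ := by
    induction n with
    | zero => simp [End.one_eq_id]
    | succ n ih =>
      rw [eq_top_iff, ← r.ker_e_sup_range_f]
      refine sup_le (hker.trans le_sup_left) ?_
      rintro _ ⟨y, rfl⟩
      obtain ⟨a, ha, _, ⟨b, rfl⟩, rfl⟩ := Submodule.mem_sup.mp (ih ▸ Submodule.mem_top : y ∈ _)
      rw [map_add]
      exact Submodule.add_mem_sup (hN a ha) ⟨b, by rw [pow_succ']; rfl⟩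
  obtain ⟨n, hn⟩ := r.isNilpotent_f
  simpa [hn] using h n

lemma le_of_inf_ker_e_le (r : Sl2Relations H E F) {P N : Submodule K M}
    (hH : ∀ x ∈ P, H x ∈ P) (hE : ∀ x ∈ P, E x ∈ P) (hF : ∀ x ∈ P, F x ∈ P)
    (hN : ∀ x ∈ N, F x ∈ N) (hker : P ⊓ LinearMap.ker E ≤ N) : P ≤ N := by
  have rP : Sl2Relations (H.restrict hH) (E.restrict hE) (F.restrict hF) :=
    ⟨LinearMap.ext fun x => Subtype.ext (LinearMap.congr_fun r.lie_e_f (x : M)),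
      LinearMap.ext fun x => Subtype.ext (LinearMap.congr_fun r.lie_h_e (x : M)),
      LinearMap.ext fun x => Subtype.ext (LinearMap.congr_fun r.lie_h_f (x : M))⟩
  rw [← Submodule.comap_subtype_eq_top]
  exact rP.eq_top_of_ker_e_le (fun x hx => hN x hx) fun x hx =>
    hker ⟨x.2, congrArg Subtype.val hx⟩

lemma iSup_eigenspace_eq_top (r : Sl2Relations H E F) :
    ⨆ j : ℤ, H.eigenspace (j : K) = ⊤ := by
  refine r.eq_top_of_ker_e_le (fun x hx => ?_) ?_
  · induction hx using Submodule.iSup_induction' with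
    | mem j x hx =>
      rw [End.mem_eigenspace_iff] at hx
      refine Submodule.mem_iSup_of_mem (j - 2) (End.mem_eigenspace_iff.mpr ?_)
      rw [r.h_f_apply, hx, map_smul]
      push_cast
      module
    | zero => simp
    | add x y _ _ hx hy => rw [map_add]; exact add_mem hx hy
  · exact (LinearMap.ker_le_ker_comp E F).trans
      (r.ker_f_mul_e_le.trans (iSup_le fun i => le_iSup_of_le (i : ℤ) (by simp)))

end Sl2Relations

/-- Two copies `(h₁, e₁, f₁)` and `(h₂, e₂, f₂)` of the relations of `sl₂` that commute with each
other; the `hᵢ` need not be mentioned since `hᵢ = ⁅eᵢ, fᵢ⁆`. -/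
structure CommutingSl2 {A : Type*} [LieRing A] (h₁ e₁ f₁ h₂ e₂ f₂ : A) : Prop where
  fst : Sl2Relations h₁ e₁ f₁
  snd : Sl2Relations h₂ e₂ f₂
  lie_e_e : ⁅e₁, e₂⁆ = 0
  lie_e_f : ⁅e₁, f₂⁆ = 0
  lie_f_e : ⁅f₁, e₂⁆ = 0
  lie_f_f : ⁅f₁, f₂⁆ = 0

namespace CommutingSl2

open Polynomial Module

section LieRing

variable {A B : Type*} [LieRing A] [LieRing B] {h₁ e₁ f₁ h₂ e₂ f₂ : A}

lemma flip_snd (c : CommutingSl2 h₁ e₁ f₁ h₂ e₂ f₂) : CommutingSl2 h₁ e₁ f₁ (-h₂) f₂ e₂ :=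
  ⟨c.fst, c.snd.flip, c.lie_e_f, c.lie_e_e, c.lie_f_f, c.lie_f_e⟩

lemma map {R : Type*} [CommRing R] [LieAlgebra R A] [LieAlgebra R B]
    (c : CommutingSl2 h₁ e₁ f₁ h₂ e₂ f₂) (φ : A →ₗ⁅R⁆ B) :
    CommutingSl2 (φ h₁) (φ e₁) (φ f₁) (φ h₂) (φ e₂) (φ f₂) where
  fst := c.fst.map φ
  snd := c.snd.map φ
  lie_e_e := by rw [← LieHom.map_lie, c.lie_e_e, map_zero]
  lie_e_f := by rw [← LieHom.map_lie, c.lie_e_f, map_zero]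
  lie_f_e := by rw [← LieHom.map_lie, c.lie_f_e, map_zero]
  lie_f_f := by rw [← LieHom.map_lie, c.lie_f_f, map_zero]

lemma lie_e_h (c : CommutingSl2 h₁ e₁ f₁ h₂ e₂ f₂) : ⁅e₁, h₂⁆ = 0 := by
  rw [← c.snd.lie_e_f, leibniz_lie, c.lie_e_e, c.lie_e_f, zero_lie, lie_zero, add_zero]

lemma lie_h_e (c : CommutingSl2 h₁ e₁ f₁ h₂ e₂ f₂) : ⁅h₁, e₂⁆ = 0 := by
  rw [← c.fst.lie_e_f, lie_lie, c.lie_e_e, c.lie_f_e, lie_zero, lie_zero, sub_zero]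

lemma lie_h_h (c : CommutingSl2 h₁ e₁ f₁ h₂ e₂ f₂) : ⁅h₁, h₂⁆ = 0 := by
  rw [← c.fst.lie_e_f, lie_lie, ← c.snd.lie_e_f, leibniz_lie f₁, leibniz_lie e₁ e₂, c.lie_e_e,
    c.lie_e_f, c.lie_f_e, c.lie_f_f]
  simp

end LieRing

attribute [local instance] LieRing.ofAssociativeRing

variable {K M : Type*} [Field K] [CharZero K] [AddCommGroup M] [Module K M]
  [FiniteDimensional K M] {H₁ E₁ F₁ H₂ E₂ F₂ : End K M}

lemma eq_top_of_highestWeight_mem (c : CommutingSl2 H₁ E₁ F₁ H₂ E₂ F₂) {N : Submodule K M}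
    (hF₁ : ∀ x ∈ N, F₁ x ∈ N) (hF₂ : ∀ x ∈ N, F₂ x ∈ N)
    (hN : ∀ (a b : ℕ) (x : M), E₁ x = 0 → E₂ x = 0 → H₁ x = (a : K) • x → H₂ x = (b : K) • x →
      x ∈ N) : N = ⊤ := by
  have comm {A B : End K M} (h : ⁅B, A⁆ = 0) : ⁅A, B⁆ = (0 : K) • B := by
    rw [← lie_skew, h, neg_zero, zero_smul]
  have weight {H E F : End K M} (r : Sl2Relations H E F) : ⁅H, E⁆ = (2 : K) • E := by
    rw [r.lie_h_e, ← Nat.cast_smul_eq_nsmul K, Nat.cast_ofNat]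
  have diag {H E F : End K M} (r : Sl2Relations H E F) :
      ⊤ ≤ ⨆ j : ℤ, H.eigenspace (j : K) := r.iSup_eigenspace_eq_top.ge
  refine c.fst.eq_top_of_ker_e_le hF₁ <|
    c.snd.le_of_inf_ker_e_le (mem_ker_of_lie_eq_smul (comm c.lie_e_h))
    (mem_ker_of_lie_eq_smul (comm c.lie_e_e)) (mem_ker_of_lie_eq_smul (comm c.lie_e_f)) hF₂ ?_
  have hH₁ : ∀ x ∈ LinearMap.ker E₁ ⊓ LinearMap.ker E₂,
      H₁ x ∈ LinearMap.ker E₁ ⊓ LinearMap.ker E₂ := fun x hx =>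
    ⟨mem_ker_of_lie_eq_smul (weight c.fst) x hx.1,
      mem_ker_of_lie_eq_smul (by rw [c.lie_h_e, zero_smul]) x hx.2⟩
  have hH₂ : ∀ x ∈ LinearMap.ker E₁ ⊓ LinearMap.ker E₂,
      H₂ x ∈ LinearMap.ker E₁ ⊓ LinearMap.ker E₂ := fun x hx =>
    ⟨mem_ker_of_lie_eq_smul (comm c.lie_e_h) x hx.1,
      mem_ker_of_lie_eq_smul (weight c.snd) x hx.2⟩
  refine le_of_forall_eigenvector hH₁ (le_top.trans (diag c.fst)) fun i x hx hxi => ?_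
  refine le_of_forall_eigenvector (Q := (LinearMap.ker E₁ ⊓ LinearMap.ker E₂) ⊓ H₁.eigenspace i)
    (fun y hy => ⟨hH₂ y hy.1, ?_⟩) (le_top.trans (diag c.snd)) (fun j y hy hyj => ?_)
    ⟨hx, End.mem_eigenspace_iff.mpr hxi⟩
  · have h := LinearMap.congr_fun c.lie_h_h y
    have hyi := End.mem_eigenspace_iff.mp hy.2
    refine End.mem_eigenspace_iff.mpr ?_
    rw [← map_smul, ← hyi]
    simpa [Ring.lie_def, sub_eq_zero] using h
  · by_cases hy0 : y = 0
    · exact hy0 ▸ zero_mem N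
    have hyi := End.mem_eigenspace_iff.mp hy.2
    obtain ⟨a, ha⟩ := c.fst.exists_nat hy.1.1 hyi hy0
    obtain ⟨b, hb⟩ := c.snd.exists_nat hy.1.2 hyj hy0
    exact hN a b y hy.1.1 hy.1.2 (ha ▸ hyi) (hb ▸ hyj)

/-- The coefficients of `p` make the sum `E₁ (p z) + E₂ (p z)` telescope. -/
lemma exists_aeval_mem_ker (c : CommutingSl2 H₁ E₁ F₁ H₂ E₂ F₂) {z : M} {a b : ℕ}
    (hE₁ : E₁ z = 0) (hF₂ : F₂ z = 0) (hH₁ : H₁ z = (a : K) • z) (hH₂ : H₂ z = -(b : K) • z)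
    (hba : b ≤ a) : ∃ p : K[X], p.coeff 0 = 1 ∧ (E₁ + E₂) (aeval (F₁ * E₂) p z) = 0 := by
  let q : ℕ → K := Nat.rec 1 fun r q => -q / ((r + 1) * (a - r))
  have hq {r : ℕ} (hr : r < a) : q (r + 1) * ((r + 1) * (a - r)) = -q r :=
    div_mul_cancel₀ _ <| mul_ne_zero (Nat.cast_add_one_ne_zero r)
      (sub_ne_zero.mpr (by exact_mod_cast hr.ne'))
  have comm {A B : End K M} (h : ⁅A, B⁆ = 0) (n : ℕ) (x : M) : A ((B ^ n) x) = (B ^ n) (A x) :=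
    LinearMap.congr_fun ((commute_iff_lie_eq.mpr h).pow_right n).eq x
  have hmul (r : ℕ) : ((F₁ * E₂) ^ r) z = (F₁ ^ r) ((E₂ ^ r) z) := by
    rw [(commute_iff_lie_eq.mpr c.lie_f_e).mul_pow, End.mul_apply]
  have hstep (r : ℕ) : E₁ ((F₁ ^ (r + 1)) ((E₂ ^ (r + 1)) z)) =
      ((r + 1) * (a - r) : K) • (F₁ ^ r) ((E₂ ^ (r + 1)) z) := by
    rw [c.fst.e_pow_f_apply (by rw [comm c.lie_e_e, hE₁, map_zero, map_zero]), comm c.lie_h_e, hH₁,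
      map_smul, ← sub_smul, map_smul, smul_smul]
  have hE₂ (r : ℕ) : E₂ ((F₁ ^ r) ((E₂ ^ r) z)) = (F₁ ^ r) ((E₂ ^ (r + 1)) z) := by
    rw [comm (by rw [← lie_skew, c.lie_f_e, neg_zero]), pow_succ', End.mul_apply]
  have htele : ∀ n ≤ a, (E₁ + E₂) (∑ r ∈ Finset.range (n + 1), q r • ((F₁ * E₂) ^ r) z) =
      q n • (F₁ ^ n) ((E₂ ^ (n + 1)) z) := fun n => by
    induction n with
    | zero => simp [q, hE₁]
    | succ n ih =>
      intro hn
      rw [Finset.sum_range_succ, map_add, ih (by omega), hmul, map_smul, LinearMap.add_apply,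
        hstep, hE₂, smul_add, smul_smul, hq (by omega)]
      module
  refine ⟨∑ r ∈ Finset.range (b + 1), C (q r) * X ^ r, by simp [coeff_X_pow, q], ?_⟩
  have hb : (E₂ ^ (b + 1)) z = 0 := c.snd.flip.pow_f_eq_zero hF₂ (by simp [hH₂])
  simpa [LinearMap.sum_apply, hb] using htele b hba

end CommutingSl2

section Killing

open LieAlgebra LieModule

attribute [local instance] LieRing.ofAssociativeRing

variable {K L : Type*} [Field K] [LieRing L] [LieAlgebra K L]

variable (K) in
lemma commute_ad_of_lie_eq_zero {x y : L} (h : ⁅x, y⁆ = 0) : Commute (ad K L x) (ad K L y) := by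
  rw [commute_iff_lie_eq, ← LieHom.map_lie, h, map_zero]

lemma killingForm_eq_zero_of_isNilpotent {x y : L} (hx : IsNilpotent (ad K L x))
    (h : ⁅x, y⁆ = 0) : killingForm K L x y = 0 := by
  rw [killingForm_apply_apply]
  exact (LinearMap.isNilpotent_trace_of_isNilpotent
    ((commute_ad_of_lie_eq_zero K h).isNilpotent_mul_right hx)).eq_zero

variable [IsKilling K L]

lemma eq_zero_of_killingForm_eq_zero {x : L} (h : ∀ y, killingForm K L x y = 0) : x = 0 :=
  (IsKilling.killingForm_nondegenerate K L).1 x h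

variable [FiniteDimensional K L]

lemma ad_injective : Function.Injective (ad K L) :=
  (LieHom.ker_eq_bot _).mp <| (ad_ker_eq_self_module_ker K L).trans <|
    (self_module_ker_eq_center K L).trans (center_eq_bot K L)

lemma mem_of_forall_killingForm_eq_zero {U : Submodule K L} {z : L}
    (h : ∀ w, (∀ x ∈ U, killingForm K L w x = 0) → killingForm K L w z = 0) : z ∈ U := by
  have hrefl : (killingForm K L).IsRefl := (traceForm_isSymm K L L).isRefl
  rw [← LinearMap.BilinForm.orthogonal_orthogonal (IsKilling.killingForm_nondegenerate K L) hrefl U,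
    LinearMap.BilinForm.mem_orthogonal_iff]
  exact fun w hw => h w fun x hx => hrefl _ _ (hw x hx)

lemma exists_lie_eq_of_orthogonal {x w : L}
    (h : ∀ y : L, ⁅x, y⁆ = 0 → killingForm K L w y = 0) : ∃ u, ⁅x, u⁆ = w := by
  suffices w ∈ LinearMap.range (ad K L x) from this
  refine mem_of_forall_killingForm_eq_zero fun y hy => ?_
  rw [traceForm_comm]
  refine h y (eq_zero_of_killingForm_eq_zero (K := K) fun u => ?_)
  have hyu : killingForm K L y ⁅x, u⁆ = 0 := hy _ ⟨u, rfl⟩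
  rw [← lie_skew, map_neg, LinearMap.neg_apply, traceForm_apply_lie_apply]
  exact neg_eq_zero.mpr hyu

end Killing

section Semisimple

open Module

variable {K M : Type*} [Field K] [AddCommGroup M] [Module K M] {S N : End K M}

lemma apply_eq_zero_of_pow_apply_eq_zero (hS : S.IsSemisimple) {n : ℕ} {x : M}
    (h : (S ^ n) x = 0) : S x = 0 := by
  have hx : x ∈ S.maxGenEigenspace 0 :=
    (End.mem_maxGenEigenspace _ _ _).mpr ⟨n, by simpa using h⟩
  rw [hS.isFinitelySemisimple.maxGenEigenspace_eq_eigenspace] at hx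
  simpa using hx

lemma ker_sup_range_of_isSemisimple [FiniteDimensional K M] (hS : S.IsSemisimple) :
    LinearMap.ker S ⊔ LinearMap.range S = ⊤ := by
  obtain ⟨n, hn, hn1⟩ := (S.eventually_isCompl_ker_pow_range_pow.and
    (Filter.eventually_ge_atTop 1)).exists
  obtain ⟨k, rfl⟩ := Nat.exists_eq_add_of_le' hn1
  refine top_unique (hn.sup_eq_top.ge.trans (sup_le_sup
    (fun x hx => apply_eq_zero_of_pow_apply_eq_zero hS hx) ?_))
  rw [pow_succ']
  exact LinearMap.range_comp_le_range _ _

lemma apply_eq_smul_of_mem_maxGenEigenspace_add (hSN : Commute S N) (hS : S.IsSemisimple)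
    (hN : IsNilpotent N) {α : K} {x : M} (hx : x ∈ (S + N).maxGenEigenspace α) : S x = α • x := by
  obtain ⟨k, hk⟩ := hN.neg
  have hxN : x ∈ (-N).maxGenEigenspace 0 :=
    (End.mem_maxGenEigenspace _ _ _).mpr ⟨k, by simp [hk]⟩
  have hcomm : Commute (S + N) (-N) := (hSN.add_left (Commute.refl N)).neg_right
  have hxS := End.genEigenspace_inf_le_add _ _ _ _ _ _ hcomm ⟨hx, hxN⟩
  rw [add_neg_cancel_right, add_zero, top_add] at hxS
  exact End.mem_eigenspace_iff.mp
    (hS.isFinitelySemisimple.maxGenEigenspace_eq_eigenspace α ▸ hxS)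

end Semisimple

section Jordan

open Module LieAlgebra

attribute [local instance] LieRing.ofAssociativeRing

variable {K L : Type*} [Field K] [LieRing L] [LieAlgebra K L]

variable (K) in
/-- `s` and `n` are the Jordan components of `s + n`: they commute, `ad s` is semisimple and `ad n`
is nilpotent. -/
structure IsJordanPair (s n : L) : Prop where
  lie_eq_zero : ⁅s, n⁆ = 0
  isSemisimple : (ad K L s).IsSemisimple
  isNilpotent : IsNilpotent (ad K L n)

namespace IsJordanPair

variable {s n : L}

lemma map (P : IsJordanPair K s n) (θ : L ≃ₗ⁅K⁆ L) : IsJordanPair K (θ s) (θ n) where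
  lie_eq_zero := by rw [← LieEquiv.map_lie, P.lie_eq_zero, map_zero]
  isSemisimple := (LinearEquiv.isSemisimple_iff (ad K L s) (ad K L (θ s)) θ.toLinearEquiv
    (LinearMap.ext fun y => LieEquiv.map_lie θ s y)).mp P.isSemisimple
  isNilpotent := by
    have hconj : ad K L (θ n) = θ.toLinearEquiv.conjAlgEquiv K (ad K L n) := by
      ext y
      obtain ⟨y, rfl⟩ := θ.surjective y
      change ⁅θ n, θ y⁆ = θ ⁅n, θ.symm (θ y)⁆
      rw [LieEquiv.symm_apply_apply, LieEquiv.map_lie]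
    exact hconj ▸ P.isNilpotent.map _

lemma smul (P : IsJordanPair K s n) (a : K) : IsJordanPair K (a • s) (a • n) where
  lie_eq_zero := by rw [smul_lie, lie_smul, P.lie_eq_zero, smul_zero, smul_zero]
  isSemisimple := by rw [map_smul]; exact End.IsSemisimple_smul a P.isSemisimple
  isNilpotent := by rw [map_smul]; exact P.isNilpotent.smul a

lemma lie_eq_zero_of_pow (P : IsJordanPair K s n) {k : ℕ} {x : L}
    (h : (ad K L (s + n) ^ k) x = 0) : ⁅s, x⁆ = 0 := by
  have hx : x ∈ (ad K L s + ad K L n).maxGenEigenspace 0 :=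
    (End.mem_maxGenEigenspace _ _ _).mpr ⟨k, by simpa using h⟩
  simpa using apply_eq_smul_of_mem_maxGenEigenspace_add
    (commute_ad_of_lie_eq_zero K P.lie_eq_zero) P.isSemisimple P.isNilpotent hx

end IsJordanPair

variable [FiniteDimensional K L]

lemma semisimplePart_lie [IsAlgClosed K] {c : L} {S N : End K L} (hc : ad K L c = S + N)
    (hSN : Commute S N) (hS : S.IsSemisimple) (hN : IsNilpotent N) (x y : L) :
    S ⁅x, y⁆ = ⁅x, S y⁆ - ⁅y, S x⁆ := by
  have htop (x : L) : x ∈ ⨆ α : K, (ad K L c).maxGenEigenspace α :=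
    (ad K L c).iSup_maxGenEigenspace_eq_top ▸ Submodule.mem_top
  have heig {α : K} {x : L} (hx : x ∈ (ad K L c).maxGenEigenspace α) : S x = α • x :=
    apply_eq_smul_of_mem_maxGenEigenspace_add hSN hS hN (hc ▸ hx)
  induction htop x using Submodule.iSup_induction' with
  | zero => simp
  | add x₁ x₂ _ _ h₁ h₂ => rw [add_lie, map_add, h₁, h₂, map_add, add_lie, lie_add]; abel
  | mem α x hx =>
    induction htop y using Submodule.iSup_induction' with
    | zero => simp
    | add y₁ y₂ _ _ h₁ h₂ => rw [lie_add, map_add, h₁, h₂, map_add, add_lie, lie_add]; abel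
    | mem β y hy =>
      rw [heig hx, heig hy, heig (LieModule.lie_mem_maxGenEigenspace_toEnd hx hy), lie_smul,
        lie_smul, ← lie_skew x y]
      module

lemma exists_isJordanPair [IsAlgClosed K] [CharZero K] [IsKilling K L] (c : L) :
    ∃ s n : L, c = s + n ∧ IsJordanPair K s n := by
  obtain ⟨N, hN, S, hS, hnil, hss, hc⟩ := (ad K L c).exists_isNilpotent_isSemisimple
  rw [add_comm] at hc
  have hSN : Commute S N := (Algebra.commute_of_mem_adjoin_singleton_of_commute hS
    (Algebra.commute_of_mem_adjoin_self hN).symm).symm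
  obtain ⟨s, hs⟩ := LieDerivation.IsKilling.exists_eq_ad (R := K) (L := L)
    ⟨S, semisimplePart_lie hc hSN hss hnil⟩
  have hs : ad K L s = S := LinearMap.ext fun y => by simpa using DFunLike.congr_fun hs y
  have hn : ad K L (c - s) = N := by rw [map_sub, hs, hc, add_sub_cancel_left]
  refine ⟨s, c - s, (add_sub_cancel s c).symm, ad_injective (K := K) ?_, hs ▸ hss, hn ▸ hnil⟩
  rw [LieHom.map_lie, hs, hn, map_zero, commute_iff_lie_eq.mp hSN]

namespace IsJordanPair

variable {s n : L}

variable [IsKilling K L]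

lemma exists_lie_eq (P : IsJordanPair K s n) : ∃ u, ⁅s + n, u⁆ = n := by
  refine exists_lie_eq_of_orthogonal (K := K) fun y hy => ?_
  have hsy : ⁅s, y⁆ = 0 := P.lie_eq_zero_of_pow (k := 1) (by simpa using hy)
  exact killingForm_eq_zero_of_isNilpotent P.isNilpotent (by simpa [hsy] using hy)

variable [CharZero K]

lemma unique (P : IsJordanPair K s n) {s' n' : L} (P' : IsJordanPair K s' n')
    (h : s + n = s' + n') : s = s' ∧ n = n' := by
  obtain ⟨hn, hs⟩ := End.isNilpotent_isSemisimple_unique P.isNilpotent P.isSemisimple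
    P'.isNilpotent P'.isSemisimple (commute_ad_of_lie_eq_zero K P.lie_eq_zero).symm
    (commute_ad_of_lie_eq_zero K P'.lie_eq_zero).symm
    (by rw [← map_add, ← map_add, add_comm, h, add_comm])
  exact ⟨ad_injective hs, ad_injective hn⟩

lemma map_eq_smul (P : IsJordanPair K s n) {θ : L ≃ₗ⁅K⁆ L} {a : K}
    (h : θ (s + n) = a • (s + n)) : θ s = a • s ∧ θ n = a • n :=
  (P.map θ).unique (P.smul a) (by rw [← map_add, h, smul_add])

end IsJordanPair

end Jordan

section Weights

open Module LieAlgebra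

variable {K L : Type*} [Field K] [LieRing L] [LieAlgebra K L]

variable (K) in
/-- `x` lies in the eigenspace of `ad h` for the integer `j`; in particular `0` has every weight. -/
def HasWeight (h : L) (j : ℤ) (x : L) : Prop := ⁅h, x⁆ = (j : K) • x

variable (K) in
/-- `ad h` is diagonalizable with integral eigenvalues, so that `L` is graded by the weights. -/
def IsGradingElement (h : L) : Prop := ⨆ j : ℤ, (ad K L h).eigenspace (j : K) = ⊤

namespace HasWeight

variable {h x y : L} {i j : ℤ}

lemma zero_iff : HasWeight K h 0 x ↔ ⁅h, x⁆ = 0 := by simp [HasWeight]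

lemma two_iff : HasWeight K h 2 x ↔ ⁅h, x⁆ = 2 • x := by
  rw [HasWeight, Int.cast_ofNat, ← Nat.cast_smul_eq_nsmul K, Nat.cast_ofNat]

lemma neg_two_iff : HasWeight K h (-2) x ↔ ⁅h, x⁆ = -(2 • x) := by
  rw [HasWeight, Int.cast_neg, Int.cast_ofNat, ← Nat.cast_smul_eq_nsmul K, Nat.cast_ofNat, neg_smul]

lemma lie (hx : HasWeight K h i x) (hy : HasWeight K h j y) : HasWeight K h (i + j) ⁅x, y⁆ := by
  rw [HasWeight, leibniz_lie, hx, hy, smul_lie, lie_smul]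
  push_cast
  module

lemma smul (hx : HasWeight K h i x) (a : K) : HasWeight K h i (a • x) := by
  rw [HasWeight, lie_smul, hx, smul_comm]

lemma add (hx : HasWeight K h i x) (hy : HasWeight K h i y) : HasWeight K h i (x + y) := by
  rw [HasWeight, lie_add, hx, hy, smul_add]

lemma neg (hx : HasWeight K h i x) : HasWeight K h i (-x) := by
  rw [HasWeight, lie_neg, hx, smul_neg]

lemma sub (hx : HasWeight K h i x) (hy : HasWeight K h i y) : HasWeight K h i (x - y) :=
  sub_eq_add_neg x y ▸ hx.add hy.neg

lemma pow_lie (hx : HasWeight K h i x) (hy : HasWeight K h j y) (n : ℕ) :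
    HasWeight K h (n * i + j) ((ad K L x ^ n) y) := by
  induction n with
  | zero => simpa using hy
  | succ n ih =>
    rw [pow_succ', End.mul_apply, ad_apply]
    convert hx.lie ih using 1
    push_cast
    ring

variable [CharZero K]

lemma eq_zero (hx : HasWeight K h i x) (hy : HasWeight K h j x) (hij : i ≠ j) : x = 0 := by
  have hsub : ((i : K) - j) • x = 0 := by rw [sub_smul, ← hx, ← hy, sub_self]
  exact (smul_eq_zero.mp hsub).resolve_left (sub_ne_zero.mpr (by exact_mod_cast hij))

lemma eq_zero_of_add_eq_zero (hx : HasWeight K h i x) (hy : HasWeight K h j y) (hij : i ≠ j)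
    (hxy : x + y = 0) : x = 0 ∧ y = 0 := by
  obtain rfl : x = -y := eq_neg_of_add_eq_zero_left hxy
  have hy0 : y = 0 := neg_eq_zero.mp (hx.eq_zero hy.neg hij)
  simp [hy0]

lemma killingForm_eq_zero (hx : HasWeight K h i x) (hy : HasWeight K h j y) (hij : i + j ≠ 0) :
    killingForm K L x y = 0 := by
  have hinv : -killingForm K L ⁅h, x⁆ y = killingForm K L x ⁅h, y⁆ := by
    rw [← LinearMap.neg_apply, ← map_neg, lie_skew]
    exact LieModule.traceForm_apply_lie_apply K L L x h y
  rw [hx, hy, map_smul, map_smul, LinearMap.smul_apply, smul_eq_mul, smul_eq_mul] at hinv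
  have hmul : ((i : K) + j) * killingForm K L x y = 0 := by linear_combination -hinv
  exact (mul_eq_zero.mp hmul).resolve_left (by exact_mod_cast hij)

end HasWeight

namespace IsGradingElement

variable {h : L}

lemma induction (hh : IsGradingElement K h) {N : Submodule K L}
    (hN : ∀ (j : ℤ) (x : L), HasWeight K h j x → x ∈ N) (x : L) : x ∈ N :=
  (hh.ge.trans (iSup_le fun j y hy => hN j y (End.mem_eigenspace_iff.mp hy))) Submodule.mem_top

lemma linearMap_ext (hh : IsGradingElement K h) {M : Type*} [AddCommGroup M] [Module K M]
    {A B : L →ₗ[K] M} (hAB : ∀ (j : ℤ) (x : L), HasWeight K h j x → A x = B x) : A = B :=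
  LinearMap.ext (hh.induction (N := LinearMap.eqLocus A B) hAB)

lemma le_of_forall_weight [FiniteDimensional K L] (hh : IsGradingElement K h) {P N : Submodule K L}
    (hP : ∀ x ∈ P, ⁅h, x⁆ ∈ P) (hN : ∀ (j : ℤ), ∀ x ∈ P, HasWeight K h j x → x ∈ N) : P ≤ N :=
  le_of_forall_eigenvector (H := ad K L h) hP (le_top.trans hh.ge) hN

variable [CharZero K]

lemma isInternal (hh : IsGradingElement K h) :
    DirectSum.IsInternal fun j : ℤ => (ad K L h).eigenspace (j : K) :=
  DirectSum.isInternal_submodule_of_iSupIndep_of_iSup_eq_top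
    ((End.eigenspaces_iSupIndep (ad K L h)).comp Int.cast_injective) hh

/-- The linear map that multiplies each vector of weight `j` by `c j`. -/
noncomputable def scale (hh : IsGradingElement K h) (c : ℤ → K) : End K L :=
  DirectSum.toModule K ℤ L (fun j => c j • ((ad K L h).eigenspace (j : K)).subtype) ∘ₗ
    (LinearEquiv.ofBijective (DirectSum.coeLinearMap _) hh.isInternal).symm

/-- The projection onto the vectors of weight `j`. -/
noncomputable def proj (hh : IsGradingElement K h) (j : ℤ) : End K L := hh.scale (Pi.single j 1)

lemma scale_apply (hh : IsGradingElement K h) (c : ℤ → K) {j : ℤ} {x : L}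
    (hx : HasWeight K h j x) : hh.scale c x = c j • x := by
  let A (j : ℤ) : Submodule K L := (ad K L h).eigenspace (j : K)
  let y : A j := ⟨x, End.mem_eigenspace_iff.mpr hx⟩
  have hy : DirectSum.coeLinearMap A (DirectSum.lof K ℤ (fun i => A i) j y) = x :=
    DirectSum.coeLinearMap_lof A j y
  have hsymm : (LinearEquiv.ofBijective (DirectSum.coeLinearMap A) hh.isInternal).symm x =
      DirectSum.lof K ℤ (fun i => A i) j y :=
    (LinearEquiv.symm_apply_eq _).mpr hy.symm
  rw [scale, LinearMap.comp_apply, LinearEquiv.coe_coe, hsymm, DirectSum.toModule_lof]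
  rfl

lemma proj_self (hh : IsGradingElement K h) {j : ℤ} {x : L} (hx : HasWeight K h j x) :
    hh.proj j x = x := by
  simp [proj, hh.scale_apply _ hx]

lemma proj_of_ne (hh : IsGradingElement K h) {i j : ℤ} {x : L} (hx : HasWeight K h i x)
    (hij : i ≠ j) : hh.proj j x = 0 := by
  simp [proj, hh.scale_apply _ hx, hij]

lemma hasWeight_proj (hh : IsGradingElement K h) (j : ℤ) (x : L) :
    HasWeight K h j (hh.proj j x) := by
  refine hh.induction (N := ((ad K L h).eigenspace (j : K)).comap (hh.proj j))
    (fun i x hx => End.mem_eigenspace_iff.mpr ?_) x |> End.mem_eigenspace_iff.mp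
  rcases eq_or_ne i j with rfl | hij
  · rwa [hh.proj_self hx]
  · rw [hh.proj_of_ne hx hij, map_zero, smul_zero]

lemma proj_lie (hh : IsGradingElement K h) {i : ℤ} {a : L} (ha : HasWeight K h i a) (j : ℤ)
    (x : L) : hh.proj (i + j) ⁅a, x⁆ = ⁅a, hh.proj j x⁆ := by
  refine LinearMap.congr_fun (hh.linearMap_ext (A := hh.proj (i + j) ∘ₗ ad K L a)
    (B := ad K L a ∘ₗ hh.proj j) fun k x hx => ?_) x
  simp only [LinearMap.comp_apply, ad_apply]
  rcases eq_or_ne k j with rfl | hkj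
  · rw [hh.proj_self hx, hh.proj_self (ha.lie hx)]
  · rw [hh.proj_of_ne hx hkj, hh.proj_of_ne (ha.lie hx) (by omega), lie_zero]

lemma eq_zero_of_forall_proj_eq_zero [FiniteDimensional K L] (hh : IsGradingElement K h) {x : L}
    (hx : ∀ j, hh.proj j x = 0) : x = 0 := by
  have hh0 : HasWeight K h 0 h := HasWeight.zero_iff.mpr (lie_self h)
  refine (Submodule.mem_bot K).mp <| hh.le_of_forall_weight
    (P := ⨅ j, LinearMap.ker (hh.proj j)) (fun y hy => ?_) (fun j y hy hyj => ?_)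
    ((Submodule.mem_iInf _).mpr hx)
  · rw [Submodule.mem_iInf] at hy ⊢
    intro j
    rw [LinearMap.mem_ker, ← zero_add j, hh.proj_lie hh0, LinearMap.mem_ker.mp (hy j), lie_zero]
  · exact (Submodule.mem_bot K).mpr (hh.proj_self hyj ▸ (Submodule.mem_iInf _).mp hy j)

lemma killingForm_proj (hh : IsGradingElement K h) {j : ℤ} {y : L} (hy : HasWeight K h j y)
    (x : L) : killingForm K L (hh.proj (-j) x) y = killingForm K L x y := by
  refine LinearMap.congr_fun (hh.linearMap_ext (A := (killingForm K L).flip y ∘ₗ hh.proj (-j))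
    (B := (killingForm K L).flip y) fun k x hx => ?_) x
  simp only [LinearMap.comp_apply]
  rcases eq_or_ne k (-j) with rfl | hkj
  · rw [hh.proj_self hx]
  · rw [hh.proj_of_ne hx hkj, map_zero]
    exact (hx.killingForm_eq_zero hy (by omega)).symm

lemma exists_max_weight [FiniteDimensional K L] [IsKilling K L] (hh : IsGradingElement K h)
    (h0 : h ≠ 0) :
    ∃ m : ℕ, (∃ x ≠ 0, HasWeight K h m x) ∧
      ∀ (j : ℤ) (x : L), HasWeight K h j x → x ≠ 0 → -m ≤ j ∧ j ≤ m := by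
  let W : Set ℤ := {j | ∃ x ≠ 0, HasWeight K h j x}
  have hneg : ∀ j ∈ W, -j ∈ W := by
    rintro j ⟨x, hx0, hx⟩
    by_contra hj
    refine hx0 (eq_zero_of_killingForm_eq_zero (K := K) fun y => ?_)
    have hy : hh.proj (-j) y = 0 := by
      by_contra hy0
      exact hj ⟨_, hy0, hh.hasWeight_proj (-j) y⟩
    rw [LieModule.traceForm_comm, ← hh.killingForm_proj hx, hy, map_zero, LinearMap.zero_apply]
  have hfin : W.Finite := by
    refine ((ad K L h).finite_hasEigenvalue.preimage Int.cast_injective.injOn).subset ?_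
    rintro j ⟨x, hx0, hx⟩
    exact End.hasEigenvalue_of_hasEigenvector ⟨End.mem_eigenspace_iff.mpr hx, hx0⟩
  have h0W : 0 ∈ W := ⟨h, h0, HasWeight.zero_iff.mpr (lie_self h)⟩
  obtain ⟨M, hM, hmax⟩ := W.exists_max_image id hfin ⟨0, h0W⟩
  lift M to ℕ using hmax 0 h0W
  refine ⟨M, hM, fun j x hx hx0 => ⟨?_, hmax j ⟨x, hx0, hx⟩⟩⟩
  exact neg_le.mp (hmax _ (hneg j ⟨x, hx0, hx⟩))

lemma exists_hasWeight_lie_eq (hh : IsGradingElement K h) {i j : ℤ} {a u w : L}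
    (ha : HasWeight K h i a) (hw : HasWeight K h (i + j) w) (hu : ⁅a, u⁆ = w) :
    ∃ u', HasWeight K h j u' ∧ ⁅a, u'⁆ = w :=
  ⟨hh.proj j u, hh.hasWeight_proj j u, by rw [← hh.proj_lie ha, hu, hh.proj_self hw]⟩

end IsGradingElement

namespace Sl2Relations

attribute [local instance] LieRing.ofAssociativeRing

variable [CharZero K] [FiniteDimensional K L] {h e f x : L}

lemma isGradingElement (r : Sl2Relations h e f) : IsGradingElement K h :=
  (r.map (ad K L)).iSup_eigenspace_eq_top

lemma exists_nat_of_lie_eq_smul (r : Sl2Relations h e f) {a : K} (hex : ⁅e, x⁆ = 0)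
    (hx : ⁅h, x⁆ = a • x) (hx0 : x ≠ 0) : ∃ n : ℕ, a = n :=
  (r.map (ad K L)).exists_nat hex hx hx0

lemma eq_zero_of_lie_f_eq_zero (r : Sl2Relations h e f) (hfx : ⁅f, x⁆ = 0)
    (hx : ⁅h, x⁆ = (2 : K) • x) : x = 0 := by
  by_contra hx0
  obtain ⟨k, hk⟩ := r.flip.exists_nat_of_lie_eq_smul (K := K) (a := -2) hfx
    (by simp [hx]) hx0
  have : ((k + 2 : ℕ) : K) = 0 := by push_cast; linear_combination -hk
  exact absurd (Nat.cast_eq_zero.mp this) (by omega)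

end Sl2Relations

end Weights

section GradingAutomorphism

open Module LieAlgebra

variable {K L : Type*} [Field K]

lemma eq_two_or_eq_neg_of_zpow_eq {m : ℕ} {ζ : K} (hζ : IsPrimitiveRoot ζ (m + 2)) {j : ℤ}
    (hj : ζ ^ j = ζ ^ 2) (hm : -m ≤ j ∧ j ≤ m) : j = 2 ∨ j = -m := by
  have hζ0 : ζ ≠ 0 := hζ.ne_zero (by omega)
  have hone : ζ ^ (j - 2) = 1 := by
    rw [zpow_sub₀ hζ0, hj, zpow_ofNat, div_self (pow_ne_zero 2 hζ0)]
  obtain ⟨q, hq⟩ := (hζ.zpow_eq_one_iff_dvd _).mp hone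
  push_cast at hq
  have hq_lt : q < 1 := by by_contra; nlinarith
  have hq_gt : -2 < q := by by_contra; nlinarith
  obtain rfl | rfl : q = 0 ∨ q = -1 := by omega
  · exact Or.inl (by omega)
  · exact Or.inr (by omega)

variable [LieRing L] [LieAlgebra K L] {h : L}

lemma exists_eq_add_of_lieEquiv [FiniteDimensional K L] (hh : IsGradingElement K h) {m : ℕ}
    (hbound : ∀ (j : ℤ) (x : L), HasWeight K h j x → x ≠ 0 → -m ≤ j ∧ j ≤ m)
    {ζ : K} (hζ : IsPrimitiveRoot ζ (m + 2)) {θ : L ≃ₗ⁅K⁆ L}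
    (hθ : ∀ (j : ℤ) (x : L), HasWeight K h j x → θ x = ζ ^ j • x) {x : L} (hx : θ x = ζ ^ 2 • x) :
    ∃ a b, HasWeight K h 2 a ∧ HasWeight K h (-m) b ∧ x = a + b := by
  have hθh : θ h = h := by simpa using hθ 0 h (by simp [HasWeight])
  have hle : End.eigenspace (θ : L →ₗ[K] L) (ζ ^ 2) ≤
      (ad K L h).eigenspace ((2 : ℤ) : K) ⊔ (ad K L h).eigenspace ((-m : ℤ) : K) := by
    refine hh.le_of_forall_weight (fun y hy => ?_) fun j y hy hyj => ?_
    · have hy : θ y = ζ ^ 2 • y := End.mem_eigenspace_iff.mp hy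
      refine End.mem_eigenspace_iff.mpr (?_ : θ ⁅h, y⁆ = _)
      rw [LieEquiv.map_lie, hθh, hy, lie_smul]
    · have hy : θ y = ζ ^ 2 • y := End.mem_eigenspace_iff.mp hy
      rcases eq_or_ne y 0 with rfl | hy0
      · exact zero_mem _
      have hj : ζ ^ j = ζ ^ 2 := smul_left_injective K hy0 ((hθ j y hyj).symm.trans hy)
      rcases eq_two_or_eq_neg_of_zpow_eq hζ hj (hbound j y hyj hy0) with rfl | rfl
      · exact Submodule.mem_sup_left (End.mem_eigenspace_iff.mpr hyj)
      · exact Submodule.mem_sup_right (End.mem_eigenspace_iff.mpr hyj)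
  obtain ⟨a, ha, b, hb, rfl⟩ := Submodule.mem_sup.mp (hle (End.mem_eigenspace_iff.mpr hx))
  exact ⟨a, b, End.mem_eigenspace_iff.mp ha, End.mem_eigenspace_iff.mp hb, rfl⟩

variable [CharZero K]

namespace IsGradingElement

lemma scale_lie (hh : IsGradingElement K h) {c : ℤ → K} (hc : ∀ i j, c (i + j) = c i * c j)
    (x y : L) : hh.scale c ⁅x, y⁆ = ⁅hh.scale c x, hh.scale c y⁆ := by
  have hbilin : (ad K L : L →ₗ[K] End K L).compr₂ (hh.scale c) =
      (ad K L : L →ₗ[K] End K L).compl₁₂ (hh.scale c) (hh.scale c) :=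
    hh.linearMap_ext fun i x hx => hh.linearMap_ext fun j y hy => by
      change hh.scale c ⁅x, y⁆ = ⁅hh.scale c x, hh.scale c y⁆
      rw [hh.scale_apply c hx, hh.scale_apply c hy, hh.scale_apply c (hx.lie hy), hc, smul_lie,
        lie_smul, smul_smul]
  exact LinearMap.congr_fun (LinearMap.congr_fun hbilin x) y

lemma scale_scale (hh : IsGradingElement K h) {c d : ℤ → K} (hcd : ∀ j, c j * d j = 1) (x : L) :
    hh.scale c (hh.scale d x) = x := by
  refine LinearMap.congr_fun (hh.linearMap_ext (A := hh.scale c ∘ₗ hh.scale d)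
    (B := LinearMap.id) fun j x hx => ?_) x
  rw [LinearMap.comp_apply, hh.scale_apply d hx, map_smul, hh.scale_apply c hx, smul_smul,
    mul_comm, hcd, one_smul, LinearMap.id_apply]

lemma exists_lieEquiv_zpow_smul (hh : IsGradingElement K h) {ζ : K} (hζ : ζ ≠ 0) :
    ∃ θ : L ≃ₗ⁅K⁆ L, ∀ (j : ℤ) (x : L), HasWeight K h j x → θ x = ζ ^ j • x := by
  have hinv (j : ℤ) : ζ ^ j ≠ 0 := zpow_ne_zero j hζ
  exact ⟨{ hh.scale fun j => ζ ^ j with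
    map_lie' := fun {x y} => hh.scale_lie (fun i j => zpow_add₀ hζ i j) x y
    invFun := hh.scale fun j => (ζ ^ j)⁻¹
    left_inv := hh.scale_scale fun j => inv_mul_cancel₀ (hinv j)
    right_inv := hh.scale_scale fun j => mul_inv_cancel₀ (hinv j) },
    fun j x hx => hh.scale_apply _ hx⟩

end IsGradingElement

end GradingAutomorphism

section Distinguished

open Module LieAlgebra

attribute [local instance] LieRing.ofAssociativeRing

variable {K L : Type*} [Field K] [LieRing L] [LieAlgebra K L]

lemma killingForm_eq_zero_of_forall_isNilpotent [FiniteDimensional K L] {C : LieSubalgebra K L}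
    (hC : ∀ x ∈ C, IsNilpotent (ad K L x)) {x y : L} (hx : x ∈ C) (hy : y ∈ C) :
    killingForm K L x y = 0 := by
  have : LieModule.IsNilpotent C L :=
    (LieModule.isNilpotent_iff_forall (R := K)).mpr fun x => hC x x.2
  exact LinearMap.congr_fun (LinearMap.congr_fun
    (LieModule.traceForm_eq_zero_of_isNilpotent K C L) ⟨x, hx⟩) ⟨y, hy⟩

variable (K) in
/-- The subalgebra `𝔤^e ∩ 𝔤^h` of the elements commuting with both `e` and `h`. -/
def doubleCentralizer (e h : L) : LieSubalgebra K L where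
  __ := LinearMap.ker (ad K L e) ⊓ LinearMap.ker (ad K L h)
  lie_mem' := by
    rintro a b ⟨hea, hha⟩ ⟨heb, hhb⟩
    have hea : ⁅e, a⁆ = 0 := hea
    have heb : ⁅e, b⁆ = 0 := heb
    have hha : ⁅h, a⁆ = 0 := hha
    have hhb : ⁅h, b⁆ = 0 := hhb
    exact ⟨show ⁅e, ⁅a, b⁆⁆ = 0 by simp [leibniz_lie e, hea, heb],
      show ⁅h, ⁅a, b⁆⁆ = 0 by simp [leibniz_lie h, hha, hhb]⟩

lemma mem_doubleCentralizer {e h x : L} :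
    x ∈ doubleCentralizer K e h ↔ ⁅e, x⁆ = 0 ∧ ⁅h, x⁆ = 0 := Iff.rfl

variable [IsAlgClosed K] [CharZero K] [FiniteDimensional K L] [IsKilling K L] {e h f : L}

lemma isNilpotent_ad_of_distinguished
    (hdist : ∀ x : L, ⁅x, e⁆ = 0 → (ad K L x).IsSemisimple → x = 0) {x : L} (hx : ⁅x, e⁆ = 0) :
    IsNilpotent (ad K L x) := by
  obtain ⟨s, n, rfl, P⟩ := exists_isJordanPair (K := K) x
  have hs : s = 0 := hdist s (P.lie_eq_zero_of_pow (k := 1) (by simpa using hx)) P.isSemisimple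
  rw [hs, zero_add]
  exact P.isNilpotent

lemma eq_zero_of_distinguished (r : Sl2Relations h e f)
    (hdist : ∀ x : L, ⁅x, e⁆ = 0 → (ad K L x).IsSemisimple → x = 0)
    {y : L} (hey : ⁅e, y⁆ = 0) (hhy : ⁅h, y⁆ = 0) : y = 0 := by
  have rad := r.map (ad K L)
  have hh : IsGradingElement K h := r.isGradingElement
  have he : HasWeight K h 2 e := HasWeight.two_iff.mpr r.lie_h_e
  have hy : HasWeight K h 0 y := HasWeight.zero_iff.mpr hhy
  have hfy : ⁅f, y⁆ = 0 := by
    simpa using rad.pow_f_eq_zero (x := y) (n := 0) hey (by simpa using hhy)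
  refine eq_zero_of_killingForm_eq_zero (K := K) fun x => ?_
  obtain ⟨a, ha, _, ⟨b, rfl⟩, rfl⟩ :=
    Submodule.mem_sup.mp (rad.ker_e_sup_range_f ▸ Submodule.mem_top : x ∈ _)
  have hea : ⁅e, hh.proj 0 a⁆ = 0 := by
    rw [← hh.proj_lie he, show ⁅e, a⁆ = 0 from ha, map_zero]
  have hha : ⁅h, hh.proj 0 a⁆ = 0 := HasWeight.zero_iff.mp (hh.hasWeight_proj 0 a)
  have hya : killingForm K L y a = 0 := by
    rw [LieModule.traceForm_comm, ← hh.killingForm_proj hy]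
    refine killingForm_eq_zero_of_forall_isNilpotent (C := doubleCentralizer K e h)
      (fun x hx => isNilpotent_ad_of_distinguished hdist ?_) ⟨hea, hha⟩ ⟨hey, hhy⟩
    rw [← lie_skew, (mem_doubleCentralizer.mp hx).1, neg_zero]
  rw [map_add, hya, ad_apply, ← LieModule.traceForm_apply_lie_apply, ← lie_skew, hfy]
  simp

end Distinguished

section JordanSplitting

open Module LieAlgebra

variable {K L : Type*} [Field K] [LieRing L] [LieAlgebra K L]

variable (K) in
/-- An `sl₂`-triple `(e, h, f)` whose weights are bounded by `m` and such that no nonzero element of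
weight zero centralizes `e`. For a distinguished `e` the latter holds by
`eq_zero_of_distinguished`. -/
structure DistinguishedTriple (e h f : L) (m : ℕ) : Prop where
  sl2 : Sl2Relations h e f
  weight_le : ∀ (j : ℤ) (x : L), HasWeight K h j x → x ≠ 0 → -m ≤ j ∧ j ≤ m
  eq_zero_of_weight_zero : ∀ x : L, ⁅e, x⁆ = 0 → HasWeight K h 0 x → x = 0

variable (K) in
/-- A decomposition of the triple `(e, h, f)` into two commuting triples `(es, h - t, fs)` and
`(en, t, fn)` such that `es + w` and `en` are the Jordan components of `e + w`. -/
structure JordanSplitting (e h f w es fs en t fn : L) : Prop where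
  commutingSl2 : CommutingSl2 (h - t) es fs t en fn
  e_eq : e = es + en
  f_eq : f = fs + fn
  weight_es : HasWeight K h 2 es
  weight_en : HasWeight K h 2 en
  weight_fs : HasWeight K h (-2) fs
  weight_fn : HasWeight K h (-2) fn
  isJordanPair : IsJordanPair K (es + w) en

namespace DistinguishedTriple

variable {e h f : L} {m : ℕ}

lemma weight_e (D : DistinguishedTriple K e h f m) : HasWeight K h 2 e :=
  HasWeight.two_iff.mpr D.sl2.lie_h_e

lemma weight_f (D : DistinguishedTriple K e h f m) : HasWeight K h (-2) f :=
  HasWeight.neg_two_iff.mpr D.sl2.lie_h_f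

lemma eq_zero (D : DistinguishedTriple K e h f m) {j : ℤ} {x : L} (hx : HasWeight K h j x)
    (hj : j < -m ∨ m < j) : x = 0 := by
  by_contra hx0
  have := D.weight_le j x hx hx0
  omega

variable [CharZero K] [FiniteDimensional K L]

lemma isGradingElement (D : DistinguishedTriple K e h f m) : IsGradingElement K h :=
  D.sl2.isGradingElement

lemma eq_zero_of_lie_eq_zero (D : DistinguishedTriple K e h f m) {j : ℤ} {x : L}
    (hx : HasWeight K h j x) (hj : j ≤ 0) (hex : ⁅e, x⁆ = 0) : x = 0 := by
  by_contra hx0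
  obtain ⟨n, hn⟩ := D.sl2.exists_nat_of_lie_eq_smul hex hx hx0
  obtain rfl : j = n := by exact_mod_cast hn
  obtain rfl : n = 0 := by omega
  exact hx0 (D.eq_zero_of_weight_zero x hex hx)

lemma exists_sl2Relations (D : DistinguishedTriple K e h f m) {en t : L}
    (hen : HasWeight K h 2 en) (heen : ⁅e, en⁆ = 0) (ht : HasWeight K h 0 t)
    (hte : ⁅t, e⁆ = 2 • en) (hten : ⁅t, en⁆ = 2 • en) :
    ∃ fn, HasWeight K h (-2) fn ∧ ⁅e, fn⁆ = t ∧ ⁅en, f⁆ = t ∧ ⁅t, f⁆ = -(2 • fn) ∧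
      Sl2Relations t en fn := by
  have hht : ⁅t, h⁆ = 0 := by rw [← lie_skew, HasWeight.zero_iff.mp ht, neg_zero]
  have het : ⁅e, t⁆ = -(2 • en) := by rw [← lie_skew, hte]
  have hent : ⁅en, t⁆ = -(2 • en) := by rw [← lie_skew, hten]
  have henh : ⁅en, h⁆ = -(2 • en) := by rw [← lie_skew, HasWeight.two_iff.mp hen]
  have henf : ⁅en, f⁆ = t := by
    refine sub_eq_zero.mp (D.eq_zero_of_weight_zero _ ?_ ((hen.lie D.weight_f).sub ht))
    rw [lie_sub, leibniz_lie, heen, zero_lie, D.sl2.lie_e_f, henh, het, zero_add, sub_self]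
  obtain ⟨fn, hfn⟩ : ∃ fn, fn = (-1 / 2 : K) • ⁅t, f⁆ := ⟨_, rfl⟩
  have htf : ⁅t, f⁆ = -(2 • fn) := by rw [hfn]; module
  have hefn : ⁅e, fn⁆ = t := by
    rw [hfn, lie_smul, leibniz_lie, het, D.sl2.lie_e_f, hht, neg_lie, nsmul_lie, henf]
    module
  have henfn : ⁅en, fn⁆ = t := by
    rw [hfn, lie_smul, leibniz_lie, hent, neg_lie, nsmul_lie, henf, lie_self]
    module
  have hfnw : HasWeight K h (-2) fn := hfn ▸ (ht.lie D.weight_f).smul _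
  refine ⟨fn, hfnw, hefn, henf, htf, henfn, hten, ?_⟩
  have hh : HasWeight K h 0 h := HasWeight.zero_iff.mpr (lie_self h)
  rw [← HasWeight.neg_two_iff.mp hfnw, ← sub_eq_zero]
  refine D.eq_zero_of_lie_eq_zero ((ht.lie hfnw).sub (hh.lie hfnw)) (by omega) ?_
  rw [lie_sub, leibniz_lie, het, hefn, lie_self, HasWeight.neg_two_iff.mp hfnw, lie_neg, lie_nsmul,
    hefn, neg_lie, nsmul_lie, henfn]
  module

lemma exists_commutingSl2 (D : DistinguishedTriple K e h f m) {es en t : L} (he : e = es + en)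
    (hes : HasWeight K h 2 es) (hen : HasWeight K h 2 en) (hcomm : ⁅es, en⁆ = 0)
    (ht : HasWeight K h 0 t) (htes : ⁅t, es⁆ = 0) (hten : ⁅t, en⁆ = 2 • en) :
    ∃ fs fn, HasWeight K h (-2) fs ∧ HasWeight K h (-2) fn ∧ f = fs + fn ∧
      CommutingSl2 (h - t) es fs t en fn := by
  have heen : ⁅e, en⁆ = 0 := by rw [he, add_lie, hcomm, lie_self, add_zero]
  obtain ⟨fn, hfn, hefn, henf, htf, r⟩ := D.exists_sl2Relations hen heen ht
    (by rw [he, lie_add, htes, zero_add, hten]) hten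
  have hfs : HasWeight K h (-2) (f - fn) := D.weight_f.sub hfn
  have htfs : ⁅t, f - fn⁆ = 0 := by rw [lie_sub, htf, r.lie_h_f, sub_self]
  have hefs : ⁅e, f - fn⁆ = h - t := by rw [lie_sub, D.sl2.lie_e_f, hefn]
  have henfs : ⁅en, f - fn⁆ = 0 := by rw [lie_sub, henf, r.lie_e_f, sub_self]
  have hesfn : ⁅es, fn⁆ = 0 := by
    rw [he, add_lie, r.lie_e_f] at hefn
    exact add_eq_right.mp hefn
  have hfsfn : ⁅f - fn, fn⁆ = 0 := by
    refine D.eq_zero_of_lie_eq_zero (hfs.lie hfn) (by omega) ?_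
    rw [leibniz_lie, hefs, hefn, ← lie_skew _ t, htfs, sub_lie, HasWeight.neg_two_iff.mp hfn,
      r.lie_h_f, sub_self, neg_zero, add_zero]
  refine ⟨f - fn, fn, hfs, hfn, (sub_add_cancel f fn).symm, ⟨?_, ?_, ?_⟩, r, hcomm, hesfn, ?_,
    hfsfn⟩
  · rw [← hefs, he, add_lie, henfs, add_zero]
  · rw [sub_lie, HasWeight.two_iff.mp hes, htes, sub_zero]
  · rw [sub_lie, HasWeight.neg_two_iff.mp hfs, htfs, sub_zero]
  · rw [← lie_skew, henfs, neg_zero]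

lemma exists_weight_zero (D : DistinguishedTriple K e h f m) {w en wn u : L}
    (hw : HasWeight K h (-m) w) (hen : HasWeight K h 2 en) (hwn : HasWeight K h (-m) wn)
    (hu : ⁅e + w, u⁆ = en + wn) :
    ∃ t, HasWeight K h 0 t ∧ ⁅t, e⁆ = 2 • en ∧ ⁅t, w⁆ = 2 • wn := by
  have hh := D.isGradingElement
  have hproj (j : ℤ) : ⁅e, hh.proj (j - 2) u⁆ + ⁅w, hh.proj (j + m) u⁆ =
      hh.proj j en + hh.proj j wn := by
    rw [← map_add, ← hu, add_lie, map_add, ← hh.proj_lie D.weight_e, ← hh.proj_lie hw,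
      add_sub_cancel, neg_add_cancel_comm_assoc]
  have he : ⁅e, hh.proj 0 u⁆ = en := by
    have h2 := hproj 2
    rwa [D.eq_zero (hh.hasWeight_proj (2 + m) u) (by omega), lie_zero, add_zero, hh.proj_self hen,
      hh.proj_of_ne hwn (by omega), add_zero, sub_self] at h2
  have hw : ⁅w, hh.proj 0 u⁆ = wn := by
    have hm := hproj (-m)
    rwa [D.eq_zero (hh.hasWeight_proj (-m - 2) u) (by omega), lie_zero, zero_add,
      hh.proj_self hwn, hh.proj_of_ne hen (by omega), zero_add, neg_add_cancel] at hm
  refine ⟨-(2 • hh.proj 0 u), ?_, ?_, ?_⟩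
  · simpa only [ofNat_smul_eq_nsmul] using ((hh.hasWeight_proj 0 u).smul (2 : K)).neg
  · rw [← lie_skew, lie_neg, neg_neg, lie_nsmul, he]
  · rw [← lie_skew, lie_neg, neg_neg, lie_nsmul, hw]

variable [IsAlgClosed K] [IsKilling K L] {w : L}

/-- The grading automorphism attached to a primitive `(m + 2)`-th root of unity `ζ` multiplies
`e + w` by `ζ²`, so it multiplies the Jordan components of `e + w` by `ζ²`. -/
lemma exists_homogeneous_isJordanPair (D : DistinguishedTriple K e h f m)
    (hw : HasWeight K h (-m) w) :
    ∃ es en ws wn, HasWeight K h 2 es ∧ HasWeight K h 2 en ∧ HasWeight K h (-m) ws ∧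
      HasWeight K h (-m) wn ∧ e = es + en ∧ w = ws + wn ∧ IsJordanPair K (es + ws) (en + wn) := by
  have hh := D.isGradingElement
  obtain ⟨ζ, hζ⟩ := HasEnoughRootsOfUnity.exists_primitiveRoot K (m + 2)
  obtain ⟨θ, hθ⟩ := hh.exists_lieEquiv_zpow_smul (hζ.ne_zero (by omega))
  obtain ⟨s, n, hsn, P⟩ := exists_isJordanPair (K := K) (e + w)
  have hθ_sn : θ (s + n) = ζ ^ 2 • (s + n) := by
    have hpow : ζ ^ (-m : ℤ) = ζ ^ 2 := by
      rw [zpow_neg, zpow_natCast]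
      exact inv_eq_of_mul_eq_one_right (pow_add ζ m 2 ▸ hζ.pow_eq_one)
    rw [← hsn, map_add, hθ 2 e D.weight_e, hθ _ w hw, hpow, smul_add, zpow_ofNat]
  obtain ⟨hθs, hθn⟩ := P.map_eq_smul hθ_sn
  obtain ⟨es, ws, hes, hws, rfl⟩ := exists_eq_add_of_lieEquiv hh D.weight_le hζ hθ hθs
  obtain ⟨en, wn, hen, hwn, rfl⟩ := exists_eq_add_of_lieEquiv hh D.weight_le hζ hθ hθn
  obtain ⟨he, hw⟩ := (D.weight_e.sub (hes.add hen)).eq_zero_of_add_eq_zero (hw.sub (hws.add hwn))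
    (by omega) (by rw [sub_add_sub_comm, hsn, sub_eq_zero]; abel)
  exact ⟨es, en, ws, wn, hes, hen, hws, hwn, sub_eq_zero.mp he, sub_eq_zero.mp hw, P⟩

lemma exists_jordanSplitting (D : DistinguishedTriple K e h f m) (hw : HasWeight K h (-m) w) :
    ∃ es fs en t fn : L, JordanSplitting K e h f w es fs en t fn := by
  obtain ⟨es, en, ws, wn, hes, hen, hws, hwn, rfl, rfl, P⟩ := D.exists_homogeneous_isJordanPair hw
  have hsum : es + ws + (en + wn) = es + en + (ws + wn) := by abel
  obtain ⟨u, hu⟩ := P.exists_lie_eq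
  obtain ⟨t, ht, hte, htw⟩ := D.exists_weight_zero hw hen hwn (hsum ▸ hu)
  have hst : ⁅es + ws, t⁆ = 0 := by
    refine P.lie_eq_zero_of_pow (k := 2) ?_
    have hct : ⁅es + ws + (en + wn), t⁆ = -(2 • (en + wn)) := by
      rw [hsum, ← lie_skew, lie_add, hte, htw, smul_add]
    rw [pow_two, End.mul_apply, ad_apply, ad_apply, hct, lie_neg, lie_nsmul, add_lie,
      P.lie_eq_zero, lie_self, add_zero, smul_zero, neg_zero]
  obtain ⟨hest, hwst⟩ := (hes.lie ht).eq_zero_of_add_eq_zero (hws.lie ht) (by omega)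
    (by rw [← add_lie, hst])
  have htes : ⁅t, es⁆ = 0 := by rw [← lie_skew, hest, neg_zero]
  have hten : ⁅t, en⁆ = 2 • en := by rwa [lie_add, htes, zero_add] at hte
  have htwn : ⁅t, wn⁆ = 2 • wn := by rwa [lie_add, ← lie_skew, hwst, neg_zero, zero_add] at htw
  have hcomm : ⁅es, en⁆ = 0 := by
    by_cases hm : m < 4
    · exact D.eq_zero (hes.lie hen) (by omega)
    have hww : ⁅ws, wn⁆ = 0 := D.eq_zero (hws.lie hwn) (by omega)
    have hmix : HasWeight K h (2 - m) (⁅es, wn⁆ + ⁅ws, en⁆) :=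
      (hes.lie hwn).add (by simpa only [sub_eq_add_neg, add_comm] using hws.lie hen)
    refine ((hes.lie hen).eq_zero_of_add_eq_zero hmix (by omega) ?_).1
    rw [← P.lie_eq_zero, lie_add, add_lie, add_lie, hww]
    abel
  obtain ⟨fs, fn, hfs, hfn, hf, c⟩ := D.exists_commutingSl2 rfl hes hen hcomm ht htes hten
  obtain rfl : wn = 0 :=
    c.snd.eq_zero_of_lie_f_eq_zero (K := K) (D.eq_zero (hfn.lie hwn) (by omega))
      (htwn.trans (ofNat_smul_eq_nsmul K 2 wn).symm)
  exact ⟨es, fs, en, t, fn, c, rfl, hf, hes, hen, hfs, hfn, by simpa using P⟩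

end DistinguishedTriple

end JordanSplitting

section Degenerate

open Module LieAlgebra

attribute [local instance] LieRing.ofAssociativeRing

variable {K L : Type*} [Field K] [LieRing L] [LieAlgebra K L]
  {e h f w es fs en t fn v a : L} {m k : ℕ}

namespace JordanSplitting

lemma lie_en_w (S : JordanSplitting K e h f w es fs en t fn) : ⁅en, w⁆ = 0 := by
  have hsn := S.isJordanPair.lie_eq_zero
  rw [add_lie, S.commutingSl2.lie_e_e, zero_add] at hsn
  rw [← lie_skew, hsn, neg_zero]

lemma weight_t (S : JordanSplitting K e h f w es fs en t fn) : HasWeight K h 0 t := by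
  simpa [S.commutingSl2.snd.lie_e_f] using S.weight_en.lie S.weight_fn

lemma lie_fs_w (S : JordanSplitting K e h f w es fs en t fn) (D : DistinguishedTriple K e h f m)
    (hw : HasWeight K h (-m) w) : ⁅fs, w⁆ = 0 :=
  D.eq_zero (S.weight_fs.lie hw) (by omega)

lemma lie_t_w (S : JordanSplitting K e h f w es fs en t fn) (D : DistinguishedTriple K e h f m)
    (hw : HasWeight K h (-m) w) : ⁅t, w⁆ = 0 := by
  rw [← S.commutingSl2.snd.lie_e_f, lie_lie, S.lie_en_w, D.eq_zero (S.weight_fn.lie hw) (by omega),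
    lie_zero, lie_zero, sub_zero]

lemma lie_s_t (S : JordanSplitting K e h f w es fs en t fn) (D : DistinguishedTriple K e h f m)
    (hw : HasWeight K h (-m) w) : ⁅es + w, t⁆ = 0 := by
  rw [add_lie, S.commutingSl2.lie_e_h, ← lie_skew, S.lie_t_w D hw, neg_zero, add_zero]

variable [CharZero K]

lemma lie_parts_eq_zero (S : JordanSplitting K e h f w es fs en t fn)
    (D : DistinguishedTriple K e h f m) (hw : HasWeight K h (-m) w) (hkm : k ≤ m)
    (hv : HasWeight K h k v) (hev : ⁅e, v⁆ = 0) (ha : HasWeight K h (k - m - 2) a)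
    (hea : ⁅e, a⁆ = ⁅v, w⁆) :
    ⁅es, v⁆ = 0 ∧ ⁅en, v⁆ = 0 ∧ ⁅es, a⁆ = ⁅v, w⁆ ∧ ⁅en, a⁆ = 0 := by
  have hwv : ⁅w, v⁆ = -⁅v, w⁆ := (lie_skew w v).symm
  have hwa : ⁅w, a⁆ = 0 := D.eq_zero (hw.lie ha) (by omega)
  have hs : ⁅es + w, v + a⁆ = 0 := by
    refine S.isJordanPair.lie_eq_zero_of_pow (k := 1) ?_
    rw [pow_one, ad_apply, add_right_comm, ← S.e_eq, add_lie, lie_add, lie_add, hev, hea, hwv, hwa]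
    abel
  obtain ⟨hesv, hesa⟩ := (S.weight_es.lie hv).eq_zero_of_add_eq_zero
    (y := ⁅es, a⁆ - ⁅v, w⁆) (j := k - m)
    (HasWeight.sub (by convert S.weight_es.lie ha using 1; ring) (hv.lie hw)) (by omega) (by
      rw [← hs, add_lie, lie_add, lie_add, hwv, hwa]; abel)
  have hesa := sub_eq_zero.mp hesa
  rw [S.e_eq, add_lie] at hev hea
  exact ⟨hesv, by rwa [hesv, zero_add] at hev, hesa, add_eq_left.mp (hesa ▸ hea)⟩

end JordanSplitting

namespace DistinguishedTriple

variable [CharZero K] [FiniteDimensional K L] [IsKilling K L]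

lemma exists_lie_eq_lie (D : DistinguishedTriple K e h f m) (hw : HasWeight K h (-m) w)
    (hv : HasWeight K h k v) (hcent : ∀ y : L, ⁅e, y⁆ = 0 → ⁅v, y⁆ = 0) :
    ∃ a, HasWeight K h (k - m - 2) a ∧ ⁅e, a⁆ = ⁅v, w⁆ := by
  obtain ⟨u, hu⟩ : ∃ u, ⁅e, u⁆ = ⁅v, w⁆ := exists_lie_eq_of_orthogonal (K := K) fun y hy => by
    rw [← lie_skew, map_neg, LinearMap.neg_apply, LieModule.traceForm_apply_lie_apply, hcent y hy,
      map_zero, neg_zero]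
  exact D.isGradingElement.exists_hasWeight_lie_eq D.weight_e
    (by convert hv.lie hw using 1; ring) hu

/-- Applying `ad f` to `⁅e, a⁆ = ⁅v, w⁆` shows that `(m + 2 - k) • a` is congruent to
`⁅⁅f, v⁆, w⁆` modulo the range of `ad e`, and `⁅⁅f, v⁆, w⁆` is orthogonal to the centralizer
of `e`. -/
lemma exists_lie_eq_of_degenerate (D : DistinguishedTriple K e h f m) (hw : HasWeight K h (-m) w)
    (hkm : k ≤ m) (hbad : ∀ x : L, ⁅e, x⁆ = 0 → killingForm K L w ⁅⁅f, v⁆, x⁆ = 0)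
    (ha : HasWeight K h (k - m - 2) a) (hea : ⁅e, a⁆ = ⁅v, w⁆) :
    ∃ b, HasWeight K h (k - m - 4) b ∧ ⁅e, b⁆ = a := by
  have hfw : ⁅f, w⁆ = 0 := D.eq_zero (D.weight_f.lie hw) (by omega)
  have hfa : (m + 2 - k : K) • a = ⁅⁅f, v⁆, w⁆ - ⁅e, ⁅f, a⁆⁆ := by
    have hfvw : ⁅⁅f, v⁆, w⁆ = ⁅f, ⁅v, w⁆⁆ := by rw [leibniz_lie f v, hfw, lie_zero, add_zero]
    rw [hfvw, ← hea, leibniz_lie f e, ← lie_skew f, D.sl2.lie_e_f, neg_lie, show ⁅h, a⁆ = _ from ha]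
    push_cast
    module
  obtain ⟨u, hu⟩ : ∃ u, ⁅e, u⁆ = a := exists_lie_eq_of_orthogonal fun x hx => by
    have h0 : (m + 2 - k : K) * killingForm K L a x = 0 := by
      rw [← smul_eq_mul, ← LinearMap.smul_apply, ← map_smul, hfa, map_sub, LinearMap.sub_apply,
        ← lie_skew, map_neg, LinearMap.neg_apply, LieModule.traceForm_apply_lie_apply, hbad x hx,
        ← lie_skew e, map_neg, LinearMap.neg_apply, LieModule.traceForm_apply_lie_apply, hx]
      simp
    refine (mul_eq_zero.mp h0).resolve_left ?_
    exact_mod_cast (Int.cast_ne_zero (α := K) (n := m + 2 - k)).mpr (by omega)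
  exact D.isGradingElement.exists_hasWeight_lie_eq D.weight_e
    (by convert ha using 1; ring) hu

end DistinguishedTriple

namespace JordanSplitting

variable [CharZero K] [FiniteDimensional K L]

/-- The vector `k • (v + a) - ⁅t, v + a⁆` lies both in the kernel and in the range of the semisimple
endomorphism `ad (es + w)`. -/
lemma lie_t_eq_smul (S : JordanSplitting K e h f w es fs en t fn)
    (D : DistinguishedTriple K e h f m) (hw : HasWeight K h (-m) w) (hkm : k ≤ m)
    (hv : HasWeight K h k v) (hev : ⁅e, v⁆ = 0) (ha : HasWeight K h (k - m - 2) a)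
    (hea : ⁅e, a⁆ = ⁅v, w⁆) {b : L} (hb : HasWeight K h (k - m - 4) b) (heb : ⁅e, b⁆ = a) :
    ⁅t, v⁆ = (k : K) • v ∧ ⁅t, a⁆ = (k : K) • a := by
  obtain ⟨hesv, -, hesa, hena⟩ := S.lie_parts_eq_zero D hw hkm hv hev ha hea
  have hsx : ⁅es + w, v + a⁆ = 0 := by
    rw [add_lie, lie_add, lie_add, hesv, hesa, ← lie_skew w v, D.eq_zero (hw.lie ha) (by omega)]
    abel
  have hsb : ⁅es + w, b⁆ = a := by
    have henb : ⁅en, b⁆ = 0 := by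
      refine D.eq_zero_of_lie_eq_zero (S.weight_en.lie hb) (by omega) ?_
      rw [S.e_eq, add_lie, leibniz_lie es, S.commutingSl2.lie_e_e, zero_lie, zero_add,
        ← lie_add, ← add_lie, ← S.e_eq, heb, hena]
    rw [add_lie, D.eq_zero (hw.lie hb) (by omega), add_zero, ← heb, S.e_eq, add_lie, henb, add_zero]
  have hsfs : ⁅es + w, fs⁆ = h - t := by
    rw [add_lie, S.commutingSl2.fst.lie_e_f, ← lie_skew, S.lie_fs_w D hw, neg_zero, add_zero]
  obtain ⟨y, hy⟩ : ∃ y, y = (k : K) • (v + a) - ⁅t, v + a⁆ := ⟨_, rfl⟩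
  have hrange : ⁅es + w, ⁅fs, v + a⁆ + (m + 2 : K) • b⁆ = y := by
    rw [hy, lie_add, lie_smul, hsb, leibniz_lie, hsfs, hsx, lie_zero, add_zero, sub_lie, lie_add h,
      show ⁅h, v⁆ = _ from hv, show ⁅h, a⁆ = _ from ha]
    push_cast
    module
  have hker : ⁅es + w, y⁆ = 0 := by
    rw [hy, lie_sub, lie_smul, leibniz_lie, S.lie_s_t D hw, hsx, zero_lie, lie_zero, smul_zero,
      add_zero, sub_zero]
  have hy0 : y = 0 := by
    rw [← hrange, ← ad_apply K]
    refine apply_eq_zero_of_pow_apply_eq_zero S.isJordanPair.isSemisimple (n := 2) ?_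
    rw [pow_two, End.mul_apply, ad_apply, ad_apply, hrange, hker]
  have htw {j : ℤ} {z : L} (hz : HasWeight K h j z) : HasWeight K h j ((k : K) • z - ⁅t, z⁆) :=
    (hz.smul _).sub (by simpa using S.weight_t.lie hz)
  obtain ⟨htv, hta⟩ := (htw hv).eq_zero_of_add_eq_zero (htw ha) (by omega) (by
    rw [← hy0, hy, lie_add, smul_add]; abel)
  exact ⟨(sub_eq_zero.mp htv).symm, (sub_eq_zero.mp hta).symm⟩

lemma lie_eq_zero_of_degenerate [IsKilling K L] (S : JordanSplitting K e h f w es fs en t fn)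
    (D : DistinguishedTriple K e h f m) (hw : HasWeight K h (-m) w) (hkm : k ≤ m)
    (hv : HasWeight K h k v) (hcent : ∀ y : L, ⁅e, y⁆ = 0 → ⁅v, y⁆ = 0)
    (hbad : ∀ x : L, ⁅e, x⁆ = 0 → killingForm K L w ⁅⁅f, v⁆, x⁆ = 0) :
    ⁅v, w⁆ = 0 ∧ ⁅v, es⁆ = 0 ∧ ⁅v, en⁆ = 0 ∧ ⁅v, fs⁆ = 0 := by
  have hev : ⁅e, v⁆ = 0 := by rw [← lie_skew, hcent e (lie_self e), neg_zero]
  obtain ⟨a, ha, hea⟩ := D.exists_lie_eq_lie hw hv hcent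
  obtain ⟨b, hb, heb⟩ := D.exists_lie_eq_of_degenerate hw hkm hbad ha hea
  obtain ⟨hesv, henv, -, hena⟩ := S.lie_parts_eq_zero D hw hkm hv hev ha hea
  obtain ⟨htv, hta⟩ := S.lie_t_eq_smul D hw hkm hv hev ha hea hb heb
  have ha0 : a = 0 := by
    by_contra hne
    exact (S.commutingSl2.snd.map (ad K L)).pow_f_ne_zero hena hta hne le_rfl
      (D.eq_zero (S.weight_fn.pow_lie ha k) (by omega))
  have hfsv : ⁅fs, v⁆ = 0 := by
    refine (S.commutingSl2.fst.map (ad K L)).pow_f_eq_zero (n := 0) hesv ?_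
    rw [ad_apply, sub_lie, show ⁅h, v⁆ = _ from hv, htv]
    simp
  refine ⟨by rw [← hea, ha0, lie_zero], ?_, ?_, ?_⟩ <;> rw [← lie_skew]
  exacts [neg_eq_zero.mpr hesv, neg_eq_zero.mpr henv, neg_eq_zero.mpr hfsv]

end JordanSplitting

end Degenerate

section Nondegenerate

open Module LieAlgebra Polynomial

attribute [local instance] LieRing.ofAssociativeRing

variable {K L : Type*} [Field K]

lemma apply_eq_zero_of_aeval_apply_eq_zero {M : Type*} [AddCommGroup M] [Module K M] {A : End K M}
    (hA : IsNilpotent A) {p : K[X]} (hp : p.coeff 0 = 1) {x : M} (hx : aeval A p x = 0) :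
    x = 0 := by
  have hcomm : Commute (aeval A p.divX) A := by
    simpa only [aeval_X] using (Commute.all p.divX X).map (aeval A)
  have hu : IsUnit (aeval A p) := by
    rw [← p.divX_mul_X_add, hp, map_add, map_mul, aeval_X, map_one, map_one, add_comm]
    exact (hcomm.isNilpotent_mul_left hA).isUnit_one_add
  exact ((End.isUnit_iff _).mp hu).injective (hx.trans (map_zero _).symm)

variable [LieRing L] [LieAlgebra K L] [FiniteDimensional K L]

/-- The annihilator of the range of `ad s` is an ideal. -/
lemma eq_zero_of_forall_lie_lie_eq_zero [IsSimple K L] [IsKilling K L] {s v : L}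
    (hs : (ad K L s).IsSemisimple) (hs0 : s ≠ 0) (hv : ∀ y : L, ⁅v, ⁅s, y⁆⁆ = 0) : v = 0 := by
  let A : LieIdeal K L :=
    { carrier := {z | ∀ y : L, ⁅z, ⁅s, y⁆⁆ = 0}
      add_mem' := fun ha hb y => by rw [add_lie, ha y, hb y, add_zero]
      zero_mem' := fun y => zero_lie _
      smul_mem' := fun c a ha y => by rw [smul_lie, ha y, smul_zero]
      lie_mem := by
        intro x z (hz : ∀ y : L, ⁅z, ⁅s, y⁆⁆ = 0) y
        obtain ⟨p, (hp : ⁅s, p⁆ = 0), _, ⟨q, rfl⟩, rfl⟩ := Submodule.mem_sup.mp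
          (ker_sup_range_of_isSemisimple hs ▸ Submodule.mem_top : x ∈ _)
        have hps : ⁅p, ⁅s, y⁆⁆ = ⁅s, ⁅p, y⁆⁆ := by
          rw [leibniz_lie, ← lie_skew p s, hp, neg_zero, zero_lie, zero_add]
        rw [add_lie, ad_apply, ← lie_skew ⁅s, q⁆ z, hz, neg_zero, add_zero, lie_lie, hz,
          lie_zero, zero_sub, hps, hz, neg_zero] }
  have hvA : v ∈ A := hv
  rcases IsSimple.eq_bot_or_eq_top (R := K) A with hA | hA
  · rwa [hA, LieSubmodule.mem_bot] at hvA
  · have hsy (y : L) : ⁅s, y⁆ = 0 := (map_eq_zero_iff _ (ad_injective (K := K))).mp <|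
      LinearMap.ext fun z => by
        have hz : z ∈ A := hA ▸ LieSubmodule.mem_top z
        rw [ad_apply, ← lie_skew, hz y, neg_zero, LinearMap.zero_apply]
    exact absurd ((map_eq_zero_iff _ (ad_injective (K := K))).mp (LinearMap.ext hsy)) hs0

namespace JordanSplitting

variable [CharZero K] {e h f w es fs en t fn v : L} {m k : ℕ}

lemma lie_eq_zero_of_weight_le (S : JordanSplitting K e h f w es fs en t fn)
    (hcent : ∀ y : L, ⁅e, y⁆ = 0 → ⁅v, y⁆ = 0) (hven : ⁅v, en⁆ = 0) (hvfs : ⁅v, fs⁆ = 0)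
    {a b : ℕ} {z : L} (hesz : ⁅es, z⁆ = 0) (hfnz : ⁅fn, z⁆ = 0) (ha : ⁅h - t, z⁆ = (a : K) • z)
    (hb : ⁅t, z⁆ = -(b : K) • z) (hba : b ≤ a) : ⁅v, z⁆ = 0 := by
  obtain ⟨p, hp, hpz⟩ := (S.commutingSl2.map (ad K L)).exists_aeval_mem_ker hesz hfnz ha hb hba
  rw [← map_add, ← S.e_eq] at hpz
  have hcomm : Commute (ad K L v) (aeval (ad K L fs * ad K L en) p) := by
    rw [aeval_eq_sum_range]
    exact Commute.sum_right _ _ _ fun i _ => (((commute_ad_of_lie_eq_zero K hvfs).mul_right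
      (commute_ad_of_lie_eq_zero K hven)).pow_right i).smul_right _
  have hnil : IsNilpotent (ad K L fs * ad K L en) :=
    (commute_ad_of_lie_eq_zero K S.commutingSl2.lie_f_e).isNilpotent_mul_right
      (S.commutingSl2.fst.map (ad K L)).isNilpotent_f
  exact apply_eq_zero_of_aeval_apply_eq_zero hnil hp
    ((LinearMap.congr_fun hcomm.eq z).symm.trans (hcent _ hpz))

lemma lie_lie_eq_zero (S : JordanSplitting K e h f w es fs en t fn)
    (D : DistinguishedTriple K e h f m) (hw : HasWeight K h (-m) w)
    (hcent : ∀ y : L, ⁅e, y⁆ = 0 → ⁅v, y⁆ = 0) (hvw : ⁅v, w⁆ = 0) (hven : ⁅v, en⁆ = 0)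
    (hvfs : ⁅v, fs⁆ = 0) (y : L) : ⁅w, ⁅v, y⁆⁆ = 0 := by
  have c := S.commutingSl2.flip_snd.map (ad K L)
  suffices hN : LinearMap.ker (ad K L w ∘ₗ ad K L v) = ⊤ from
    LinearMap.congr_fun (LinearMap.ker_eq_top.mp hN) y
  have stable {a : L} (hva : ⁅v, a⁆ = 0) (hwa : ⁅w, a⁆ = 0) :
      ∀ x ∈ LinearMap.ker (ad K L w ∘ₗ ad K L v), ad K L a x ∈
        LinearMap.ker (ad K L w ∘ₗ ad K L v) := fun x (hx : ⁅w, ⁅v, x⁆⁆ = 0) => by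
    change ⁅w, ⁅v, ⁅a, x⁆⁆⁆ = 0
    rw [leibniz_lie v, hva, zero_lie, zero_add, leibniz_lie w, hwa, zero_lie, zero_add, hx,
      lie_zero]
  refine c.eq_top_of_highestWeight_mem
    (stable hvfs (by rw [← lie_skew, S.lie_fs_w D hw, neg_zero]))
    (stable hven (by rw [← lie_skew, S.lie_en_w, neg_zero])) fun a b z hez hfz ha hb => ?_
  have hbt : ad K L t z = -(b : K) • z := by
    rw [map_neg, LinearMap.neg_apply] at hb
    rw [neg_smul, ← hb, neg_neg]
  have hz : HasWeight K h (a - b) z := by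
    rw [HasWeight, ← sub_add_cancel h t, add_lie, ← ad_apply K, ha, ← ad_apply K, hbt]
    push_cast
    module
  change ⁅w, ⁅v, z⁆⁆ = 0
  rcases lt_or_ge a b with hab | hba
  · rw [leibniz_lie, ← lie_skew w v, hvw, D.eq_zero (hw.lie hz) (by omega)]
    simp
  rw [S.lie_eq_zero_of_weight_le hcent hven hvfs hez hfz ha hbt hba, lie_zero]

lemma eq_zero_of_degenerate [IsSimple K L]
    (S : JordanSplitting K e h f w es fs en t fn) (D : DistinguishedTriple K e h f m)
    (hw : HasWeight K h (-m) w) (hw0 : w ≠ 0) (hkm : k ≤ m) (hv : HasWeight K h k v)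
    (hcent : ∀ y : L, ⁅e, y⁆ = 0 → ⁅v, y⁆ = 0)
    (hbad : ∀ x : L, ⁅e, x⁆ = 0 → killingForm K L w ⁅⁅f, v⁆, x⁆ = 0) : v = 0 := by
  obtain ⟨hvw, hves, hven, hvfs⟩ := S.lie_eq_zero_of_degenerate D hw hkm hv hcent hbad
  have hwv := S.lie_lie_eq_zero D hw hcent hvw hven hvfs
  have hvs : ⁅v, es + w⁆ = 0 := by rw [lie_add, hves, hvw, add_zero]
  have hsemi : SemiconjBy (ad K L v) (ad K L es) (ad K L (es + w)) := LinearMap.ext fun y => by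
    simp only [End.mul_apply, ad_apply]
    rw [add_lie, hwv, add_zero, leibniz_lie v, hves, zero_lie, zero_add]
  obtain ⟨n, hn⟩ := (S.commutingSl2.fst.flip.map (ad K L)).isNilpotent_f
  have hsv (y : L) : ⁅es + w, ⁅v, y⁆⁆ = 0 := by
    refine apply_eq_zero_of_pow_apply_eq_zero S.isJordanPair.isSemisimple (n := n) ?_
    have h0 := LinearMap.congr_fun (hsemi.pow_right n).eq y
    rw [hn, mul_zero] at h0
    exact h0.symm
  refine eq_zero_of_forall_lie_lie_eq_zero S.isJordanPair.isSemisimple (s := es + w) ?_ fun y => ?_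
  · intro h0
    exact hw0 (S.weight_es.eq_zero_of_add_eq_zero hw (by omega) h0).2
  · rw [leibniz_lie, hvs, zero_lie, zero_add, hsv]

end JordanSplitting

end Nondegenerate

section PropertyP

open Module LieAlgebra

variable {K L : Type*} [Field K] [CharZero K] [LieRing L] [LieAlgebra K L]
  [FiniteDimensional K L] {e h f : L} {m : ℕ}

namespace DistinguishedTriple

lemma ker_ad_le_of_forall_weight (D : DistinguishedTriple K e h f m) {N : Submodule K L}
    (hN : ∀ (j : ℤ) (y : L), ⁅e, y⁆ = 0 → HasWeight K h j y → y ∈ N) :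
    LinearMap.ker (ad K L e) ≤ N := by
  refine D.isGradingElement.le_of_forall_weight (fun y hy => ?_) hN
  rw [LinearMap.mem_ker, ad_apply] at hy ⊢
  have heh : ⁅e, h⁆ = -(2 • e) := by rw [← lie_skew, D.sl2.lie_h_e]
  rw [leibniz_lie, heh, hy, neg_lie, nsmul_lie, hy, smul_zero, neg_zero, lie_zero, add_zero]

lemma lie_eq_zero_of_weight_max (D : DistinguishedTriple K e h f m) {x y : L}
    (hx : HasWeight K h m x) (hy : ⁅e, y⁆ = 0) : ⁅x, y⁆ = 0 := by
  refine D.ker_ad_le_of_forall_weight (N := LinearMap.ker (ad K L x)) (fun j y hy hyj => ?_) hy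
  rw [LinearMap.mem_ker, ad_apply]
  rcases le_or_gt j 0 with hj | hj
  · rw [D.eq_zero_of_lie_eq_zero hyj hj hy, lie_zero]
  · exact D.eq_zero (hx.lie hyj) (by omega)

lemma proj_lie_eq_zero (D : DistinguishedTriple K e h f m) {v : L}
    (hv : ∀ y : L, ⁅e, y⁆ = 0 → ⁅v, y⁆ = 0) (j : ℤ) {y : L} (hy : ⁅e, y⁆ = 0) :
    ⁅D.isGradingElement.proj j v, y⁆ = 0 := by
  refine D.ker_ad_le_of_forall_weight (N := LinearMap.ker (ad K L (D.isGradingElement.proj j v)))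
    (fun i y hy hyi => ?_) hy
  rw [LinearMap.mem_ker, ad_apply, ← lie_skew, ← D.isGradingElement.proj_lie hyi, ← lie_skew,
    hv y hy, neg_zero, map_zero, neg_zero]

/-- `u` is the component of lowest weight of `v`. -/
lemma exists_lowest_component (D : DistinguishedTriple K e h f m) {v : L}
    (hv : ∀ y : L, ⁅e, y⁆ = 0 → ⁅v, y⁆ = 0) (hv0 : v ≠ 0) :
    ∃ (k : ℕ) (u : L), u ≠ 0 ∧ HasWeight K h k u ∧ k ≤ m ∧ (∀ y : L, ⁅e, y⁆ = 0 → ⁅u, y⁆ = 0) ∧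
      ∀ x, HasWeight K h (m - k) x → ⁅x, v⁆ = ⁅x, u⁆ := by
  let hh := D.isGradingElement
  have hne : ∃ j, hh.proj j v ≠ 0 := by
    by_contra! hzero
    exact hv0 (hh.eq_zero_of_forall_proj_eq_zero hzero)
  obtain ⟨j, hj0, hmin⟩ := Int.exists_least_of_bdd
    ⟨-m, fun j hj => (D.weight_le j _ (hh.hasWeight_proj j v) hj).1⟩ hne
  have hcent (y : L) (hy : ⁅e, y⁆ = 0) : ⁅hh.proj j v, y⁆ = 0 := D.proj_lie_eq_zero hv j hy
  have hj : 0 ≤ j := by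
    by_contra hj
    refine hj0 (D.eq_zero_of_lie_eq_zero (hh.hasWeight_proj j v) (by omega) ?_)
    rw [← lie_skew, hcent e (lie_self e), neg_zero]
  lift j to ℕ using hj
  refine ⟨j, hh.proj j v, hj0, hh.hasWeight_proj j v,
    by exact_mod_cast (D.weight_le j _ (hh.hasWeight_proj j v) hj0).2, hcent, fun x hx => ?_⟩
  rw [← sub_eq_zero, ← lie_sub]
  refine hh.eq_zero_of_forall_proj_eq_zero fun i => ?_
  rw [← add_sub_cancel (m - j : ℤ) i, hh.proj_lie hx, map_sub]
  rcases lt_trichotomy (i - (m - j : ℤ)) j with hij | hij | hij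
  · rw [not_not.mp fun hi => hij.not_ge (hmin _ hi), zero_sub,
      hh.proj_of_ne (hh.hasWeight_proj j v) hij.ne', neg_zero, lie_zero]
  · rw [hij, hh.proj_self (hh.hasWeight_proj j v), sub_self, lie_zero]
  · rw [hh.proj_of_ne (hh.hasWeight_proj j v) hij.ne, sub_zero]
    exact D.eq_zero (hx.lie (hh.hasWeight_proj _ v)) (by omega)

variable [IsAlgClosed K] [IsSimple K L]

lemma exists_lie_lie_eq_of_hasWeight (D : DistinguishedTriple K e h f m) {k : ℕ} {u z : L}
    (hu : HasWeight K h k u) (hu0 : u ≠ 0) (hkm : k ≤ m)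
    (hcent : ∀ y : L, ⁅e, y⁆ = 0 → ⁅u, y⁆ = 0) (hz : HasWeight K h m z) :
    ∃ x : L, HasWeight K h (m + 2 - k) x ∧ ⁅e, x⁆ = 0 ∧ ⁅⁅f, x⁆, u⁆ = z := by
  let U : Submodule K L := (LinearMap.ker (ad K L e) ⊓
    (ad K L h).eigenspace ((m + 2 - k : ℤ) : K)).map (-(ad K L u ∘ₗ ad K L f))
  suffices z ∈ U by
    obtain ⟨x, ⟨hx, hxw⟩, hxz⟩ := this
    refine ⟨x, End.mem_eigenspace_iff.mp hxw, hx, ?_⟩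
    rw [← lie_skew]
    exact hxz
  refine mem_of_forall_killingForm_eq_zero fun w hw => ?_
  by_contra hwz
  have hh := D.isGradingElement
  have hw' := hh.hasWeight_proj (-m) w
  have hw'0 : hh.proj (-m) w ≠ 0 := fun h0 => hwz (by
    rw [← hh.killingForm_proj hz, h0, map_zero, LinearMap.zero_apply])
  obtain ⟨es, fs, en, t, fn, S⟩ := D.exists_jordanSplitting hw'
  refine hu0 (S.eq_zero_of_degenerate D hw' hw'0 hkm hu hcent fun x hx => ?_)
  refine D.ker_ad_le_of_forall_weight
    (N := LinearMap.ker (killingForm K L (hh.proj (-m) w) ∘ₗ ad K L ⁅f, u⁆))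
    (fun i x hx hxi => ?_) hx
  rw [LinearMap.mem_ker, LinearMap.comp_apply, ad_apply]
  have hfux := (D.weight_f.lie hu).lie hxi
  by_cases hi : i = m + 2 - k
  · have hU : ⁅⁅f, u⁆, x⁆ ∈ U := by
      refine ⟨x, ⟨hx, End.mem_eigenspace_iff.mpr (hi ▸ hxi)⟩, ?_⟩
      have hfx : ⁅⁅f, u⁆, x⁆ + ⁅u, ⁅f, x⁆⁆ = 0 := by rw [← leibniz_lie, hcent x hx, lie_zero]
      exact (eq_neg_of_add_eq_zero_left hfx).symm
    rw [show -2 + (k : ℤ) + i = m by omega] at hfux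
    rw [hh.killingForm_proj hfux, hw _ hU]
  · exact hw'.killingForm_eq_zero hfux (by omega)

lemma exists_lie_lie_eq (D : DistinguishedTriple K e h f m) {v z : L}
    (hv : ∀ y : L, ⁅e, y⁆ = 0 → ⁅v, y⁆ = 0) (hv0 : v ≠ 0) (hz : HasWeight K h m z) :
    ∃ x : L, ⁅e, x⁆ = 0 ∧ ⁅⁅f, x⁆, v⁆ = z := by
  obtain ⟨k, u, hu0, hu, hkm, hcent, hvu⟩ := D.exists_lowest_component hv hv0
  obtain ⟨x, hx, hex, hxz⟩ := D.exists_lie_lie_eq_of_hasWeight hu hu0 hkm hcent hz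
  refine ⟨x, hex, (hvu _ ?_).trans hxz⟩
  convert D.weight_f.lie hx using 1
  ring

end DistinguishedTriple

end PropertyP

lemma inCenterOfCentralizer_iff {L : Type*} [LieRing L] [LieAlgebra ℂ L] {e v : L} :
    InCenterOfCentralizer L e v ↔ ∀ y : L, ⁅e, y⁆ = 0 → ⁅v, y⁆ = 0 := by
  have hcomm (y : L) : ⁅y, e⁆ = 0 ↔ ⁅e, y⁆ = 0 := by rw [← lie_skew, neg_eq_zero]
  simp only [InCenterOfCentralizer, hcomm]
  exact ⟨fun hv => hv.2, fun hv => ⟨(hcomm v).mp (hv e (lie_self e)), hv⟩⟩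

theorem propertyP_of_type_7_general (L : Type*) [LieRing L] [LieAlgebra ℂ L]
    [FiniteDimensional ℂ L] [LieAlgebra.IsSimple ℂ L] (e h f : L) (ht : IsSl2Triple h e f)
    (hdist : IsDistinguished L e) : PropertyP L e h f := by
  have r : Sl2Relations h e f := ⟨ht.lie_e_f, ht.lie_h_e_nsmul, ht.lie_h_f_nsmul⟩
  have hh : IsGradingElement ℂ h := r.isGradingElement
  obtain ⟨m, ⟨x, hx0, hx⟩, hle⟩ := hh.exists_max_weight ht.h_ne_zero
  have D : DistinguishedTriple ℂ e h f m :=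
    ⟨r, hle, fun y hey hy => eq_zero_of_distinguished r hdist hey (HasWeight.zero_iff.mp hy)⟩
  have hxc : InCenterOfCentralizer L e x :=
    inCenterOfCentralizer_iff.mpr fun _ => D.lie_eq_zero_of_weight_max hx
  rintro μ ⟨z₀, hz₀, hz₀c, hz₀μ⟩ hmax v hv hv0 z - hz
  rw [inCenterOfCentralizer_iff] at hz₀c hv
  have hez₀ : ⁅e, z₀⁆ = 0 := by rw [← lie_skew, hz₀c e (lie_self e), neg_zero]
  obtain ⟨k, rfl⟩ := r.exists_nat_of_lie_eq_smul hez₀ hz₀μ hz₀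
  have hkm : k ≤ m := by exact_mod_cast (hle k z₀ (by simpa [HasWeight] using hz₀μ) hz₀).2
  have hmk : m ≤ k := by exact_mod_cast hmax m ⟨x, hx0, hxc, by simpa [HasWeight] using hx⟩
  obtain rfl := hkm.antisymm hmk
  obtain ⟨y, hey, hy⟩ := D.exists_lie_lie_eq hv hv0 (z := z) (by simpa [HasWeight] using hz)
  exact ⟨y, by rw [← lie_skew, hey, neg_zero], hy⟩

/-- Distinguished non-regular nilpotent elements of the complex simple
Lie algebra of type corresponding to `LieAlgebra.e₈` satisfy property (P). -/
theorem propertyP_of_type_7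
    (L : Type*) [LieRing L] [LieAlgebra ℂ L] [FiniteDimensional ℂ L]
    [LieAlgebra.IsSimple ℂ L]
    (htype : Nonempty (L ≃ₗ⁅ℂ⁆ LieAlgebra.e₈ ℂ))
    (e h f : L) (ht : IsSl2Triple h e f) (he : IsNilpotent (LieAlgebra.ad ℂ L e))
    (hdist : IsDistinguished L e)
    (hnonreg : Module.finrank ℂ ↥(centralizer L e) ≠ LieAlgebra.rank ℂ L) :
    PropertyP L e h f :=
  propertyP_of_type_7_general L e h f ht hdist
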